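/- arXiv:1710.03815 — 2 statements merged into one kernel-verified Lean document; each statement's English description precedes it below -/
import Mathlib

section
/- Let G be a finite simple graph with chromatic number χ(G) ≥ 2, and let t be the unique integer with 2ᵗ < χ(G) ≤ 2^{t+1}. Suppose there is a set F of edges of G forming a forest such that the graph obtained from G by deleting the edges in F has chromatic number at most 2ᵗ. Then there exists an integer ℓ with 0 ≤ ℓ < 2^{|F|−1} such that for all sufficiently large n, ex({M(G)}, n) = 2ⁿ(1 − 2^{−t}) + ℓ. -/
open scoped Classical

/-- `M` has an `N`-restriction: some injective linear image of `N` lies inside `M`. -/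
def HasRestriction {α β : Type*} [AddCommMonoid α] [AddCommMonoid β]
    [Module (ZMod 2) α] [Module (ZMod 2) β] (N : Set α) (M : Set β) : Prop :=
  ∃ ψ : α →ₗ[ZMod 2] β, Function.Injective ψ ∧ ψ '' N ⊆ M

/-- The set of distinct `N`-restrictions of `M` (as subsets of `M`). -/
def restrictionSet {α β : Type*} [AddCommMonoid α] [AddCommMonoid β]
    [Module (ZMod 2) α] [Module (ZMod 2) β] (N : Set α) (M : Set β) : Set (Set β) :=
  {S | S ⊆ M ∧ ∃ ψ : α →ₗ[ZMod 2] β, Function.Injective ψ ∧ S = ψ '' N}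

/-- The Turán number for a single excluded matroid `N`. -/
noncomputable def exNum {α : Type*} [AddCommMonoid α] [Module (ZMod 2) α] (N : Set α) (n : ℕ) : ℕ :=
  sSup {m | ∃ M : Set (Fin n → ZMod 2), 0 ∉ M ∧ ¬ HasRestriction N M ∧ M.ncard = m}

/-- The Turán number for a family of excluded matroids. -/
noncomputable def exNumFam (𝒩 : Set (Σ k : ℕ, Set (Fin k → ZMod 2))) (n : ℕ) : ℕ :=
  sSup {m | ∃ M : Set (Fin n → ZMod 2), 0 ∉ M ∧
    (∀ N ∈ 𝒩, ¬ HasRestriction N.2 M) ∧ M.ncard = m}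

/-- The critical number of `M ⊆ 𝔽₂ⁿ`. -/
noncomputable def critNum {n : ℕ} (M : Set (Fin n → ZMod 2)) : ℕ :=
  sInf {c | ∃ φ : (Fin n → ZMod 2) →ₗ[ZMod 2] (Fin c → ZMod 2), ∀ x ∈ M, φ x ≠ 0}

/-- The rank of `M`: dimension of its span. -/
noncomputable def rankM {n : ℕ} (M : Set (Fin n → ZMod 2)) : ℕ :=
  Module.finrank (ZMod 2) (Submodule.span (ZMod 2) M)

/-- `M` is a copy of `N^{n,t}`. -/
def IsCopyNnt {d : ℕ} (N : Set (Fin d → ZMod 2)) (n t : ℕ)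
    (M : Set (Fin n → ZMod 2)) : Prop :=
  ∃ F : Submodule (ZMod 2) (Fin n → ZMod 2), Module.finrank (ZMod 2) F = n - t ∧
    ∃ θ : (Fin d → ZMod 2) →ₗ[ZMod 2] (Fin n → ZMod 2),
      Function.Injective θ ∧ (∀ x, θ x ∈ F) ∧ M = θ '' N ∪ {x | x ∉ F}

/-- The decomposition family `𝒟(𝒩)`. -/
def decompFam (𝒩 : Set (Σ k : ℕ, Set (Fin k → ZMod 2))) (k : ℕ) :
    Set (Σ k : ℕ, Set (Fin k → ZMod 2)) :=
  {D | 0 ∉ D.2 ∧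
    (∃ N ∈ 𝒩, ∃ M : Set (Fin N.1 → ZMod 2), IsCopyNnt D.2 N.1 k M ∧ HasRestriction N.2 M) ∧
    ∀ D' : Σ k : ℕ, Set (Fin k → ZMod 2), 0 ∉ D'.2 →
      (∃ N ∈ 𝒩, ∃ M : Set (Fin N.1 → ZMod 2), IsCopyNnt D'.2 N.1 k M ∧ HasRestriction N.2 M) →
      HasRestriction D'.2 D.2 → HasRestriction D.2 D'.2}

/-- The cycle matroid of a simple graph. -/
def cycleMatroid {V : Type*} [DecidableEq V] (G : SimpleGraph V) : Set (V → ZMod 2) :=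
  {x | ∃ u v, G.Adj u v ∧ x = Pi.single u 1 + Pi.single v 1}

/-!
Adding one linear functional that equals `1` on the independent set `M(F)` to a map `𝔽₂^V → 𝔽₂ᵗ`
that is nonzero on `M(G) \ M(F)` gives a map to `𝔽₂^(t+1)` that is nonzero on `M(G)`. Hence `M(G)`
embeds in the Bose–Burton geometry `{(a, k) | a ≠ 0}` of `𝔽₂^(t+1) × K` as soon as `K` is large,
and an `M(G)`-free set `M` contains no such geometry.

If moreover `M` has density at least `1 - 2^(-t)`, it contains a huge Bose–Burton geometry with
first factor `𝔽₂ᵗ`. Modulo the flat `K` of that geometry, almost every coset of `𝔽₂ᵗ` has exactly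
one point whose class `M` mostly avoids, since otherwise the geometry could be enlarged. The
position of this point is an almost additive function, so it agrees almost everywhere with a
linear map `p` onto `𝔽₂ᵗ`, and `M` contains almost all of `{v | p v ≠ 0}`. A random linear map
then extends any embedding into `M ∩ ker p` of the part of `M(G)` killed by a map `b` to `𝔽₂ᵗ` to
an embedding of `M(G)` into `M`. So `M` is limited to `{v | p v ≠ 0}` together with a subset `D`
of `ker p` with no such embedding; conversely, `{v | p v ≠ 0} ∪ D` is `M(G)`-free for every such
`D`. The largest size `ℓ` of `D` is independent of `n`, and it is less than `2^(|F| - 1)` because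
`2^(|F| - 1)` nonzero vectors span a space of dimension at least `|F|`, so they include a copy of
`M(F)`.
-/

open Function
open scoped BigOperators

universe u

section Density

variable {α β : Type*} [Fintype α] [Fintype β] {S T : Set α}

/-- The density of a subset of a finite type: the proportion of elements that lie in it. -/
noncomputable def density (S : Set α) : ℝ := 𝔼 x, S.indicator 1 x

lemma density_nonneg (S : Set α) : 0 ≤ density S :=
  Finset.expect_nonneg fun _ _ => Set.indicator_nonneg (fun _ _ => zero_le_one) _

lemma density_le_one [Nonempty α] (S : Set α) : density S ≤ 1 :=
  Finset.expect_le Finset.univ_nonempty fun _ _ =>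
    Set.indicator_apply_le' (fun _ => le_rfl) fun _ => zero_le_one

lemma density_mono (h : S ⊆ T) : density S ≤ density T :=
  Finset.expect_le_expect fun x _ =>
    Set.indicator_le_indicator_of_subset h (fun _ => zero_le_one) x

omit [Fintype α] in
lemma indicator_iUnion_one_le_sum {ι : Type*} [Fintype ι] (S : ι → Set α) (x : α) :
    (⋃ i, S i).indicator (1 : α → ℝ) x ≤ ∑ i, (S i).indicator 1 x := by
  have nonneg (i : ι) : 0 ≤ (S i).indicator (1 : α → ℝ) x :=
    Set.indicator_nonneg (fun _ _ => zero_le_one) _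
  refine Set.indicator_apply_le' (fun hx => ?_) fun _ => Finset.sum_nonneg fun i _ => nonneg i
  obtain ⟨i, hi⟩ := Set.mem_iUnion.1 hx
  exact (Set.indicator_of_mem hi (1 : α → ℝ)).ge.trans
    (Finset.single_le_sum (fun i _ => nonneg i) (Finset.mem_univ i))

lemma density_iUnion_le {ι : Type*} [Fintype ι] (S : ι → Set α) :
    density (⋃ i, S i) ≤ ∑ i, density (S i) := by
  simp_rw [density]
  rw [← Finset.expect_sum_comm]
  exact Finset.expect_le_expect fun x _ => indicator_iUnion_one_le_sum S x

lemma density_inter_add_density_iUnion_le {ι : Type*} [Fintype ι] (S : ι → Set α) {i j : ι}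
    (hij : i ≠ j) : density (S i ∩ S j) + density (⋃ i, S i) ≤ ∑ i, density (S i) := by
  simp_rw [density]
  rw [← Finset.expect_sum_comm, ← Finset.expect_add_distrib]
  refine Finset.expect_le_expect fun x _ => ?_
  by_cases hx : x ∈ S i ∩ S j
  · calc _ = (S i).indicator (1 : α → ℝ) x + (S j).indicator 1 x := by
          rw [Set.indicator_of_mem hx, Set.indicator_of_mem hx.1, Set.indicator_of_mem hx.2,
            Set.indicator_of_mem (Set.mem_iUnion_of_mem i hx.1)]
      _ ≤ _ := Finset.add_le_sum
        (fun l _ => Set.indicator_nonneg (s := S l) (f := (1 : α → ℝ)) (fun _ _ => zero_le_one) x)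
        (Finset.mem_univ i) (Finset.mem_univ j) hij
  · rw [Set.indicator_of_notMem hx, zero_add]
    exact indicator_iUnion_one_le_sum S x

lemma card_mul_density (S : Set α) : Fintype.card α * density S = S.ncard := by
  rw [density, Fintype.card_mul_expect, Set.ncard_eq_toFinset_card',
    ← Set.filter_mem_univ_eq_toFinset]
  simp_rw [Set.indicator_apply, Pi.one_apply, Finset.sum_boole]

lemma density_compl [Nonempty α] (S : Set α) : density Sᶜ = 1 - density S := by
  rw [density, density, ← Fintype.expect_one (ι := α) (M := ℝ), ← Finset.expect_sub_distrib]
  exact Finset.expect_congr rfl fun x _ => by by_cases hx : x ∈ S <;> simp [hx]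

lemma exists_notMem_of_density_lt_one [Nonempty α] (h : density S < 1) : ∃ x, x ∉ S := by
  by_contra! hS
  rw [Set.eq_univ_of_forall hS, density, Set.indicator_univ] at h
  exact h.ne (Fintype.expect_one (M := ℝ))

lemma nonempty_of_density_pos (h : 0 < density S) : S.Nonempty := by
  rw [Set.nonempty_iff_ne_empty]
  rintro rfl
  simp [density] at h

lemma density_preimage_equiv (e : α ≃ β) (S : Set β) : density (e ⁻¹' S) = density S :=
  Fintype.expect_equiv e _ _ fun _ => rfl

lemma expect_density_comm (R : α → β → Prop) :
    𝔼 x, density {y | R x y} = 𝔼 y, density {x | R x y} := by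
  simp only [density]
  rw [Finset.expect_comm]
  rfl

lemma mul_density_le_expect {f : α → ℝ} (hf : ∀ x, 0 ≤ f x) (c : ℝ) :
    c * density {x | c ≤ f x} ≤ 𝔼 x, f x := by
  rw [density, Finset.mul_expect]
  refine Finset.expect_le_expect fun x _ => ?_
  by_cases hx : c ≤ f x <;> simp [hx, hf x]

lemma density_preimage_le_of_injective {f : α → β} (hf : Injective f) (S : Set β) :
    Fintype.card α * density (f ⁻¹' S) ≤ Fintype.card β * density S := by
  rw [card_mul_density, card_mul_density]
  exact_mod_cast Set.ncard_le_ncard_of_injOn f (fun _ => id) hf.injOn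

section Group

variable {G H : Type*} [AddCommGroup G] [Fintype G] [AddCommGroup H] [Fintype H]

lemma density_preimage_add_right (S : Set G) (a : G) : density {x | x + a ∈ S} = density S :=
  density_preimage_equiv (Equiv.addRight a) S

lemma density_preimage_of_surjective {f : G →+ H} (hf : Surjective f) (S : Set H) :
    density (f ⁻¹' S) = density S := by
  have shift (h : H) : density {x | f x + h ∈ S} = density (f ⁻¹' S) := by
    obtain ⟨g, rfl⟩ := hf h
    simp_rw [← map_add]
    exact density_preimage_add_right (f ⁻¹' S) g
  calc density (f ⁻¹' S) = 𝔼 h, density {x | f x + h ∈ S} := by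
        simp_rw [shift, Fintype.expect_const]
    _ = 𝔼 x, density {h | f x + h ∈ S} := expect_density_comm _
    _ = density S := by simp_rw [add_comm (f _), density_preimage_add_right, Fintype.expect_const]

end Group

end Density

lemma zmod_two_eq_zero_or_eq_one (c : ZMod 2) : c = 0 ∨ c = 1 :=
  or_iff_not_imp_left.2 (Fin.eq_one_of_ne_zero c)

section Random

variable {E K : Type*} [AddCommGroup E] [Module (ZMod 2) E] [Finite E]
  [AddCommGroup K] [Module (ZMod 2) K]

lemma surjective_eval_linearMap {a : E} (ha : a ≠ 0) :
    Surjective fun r : E →ₗ[ZMod 2] K => r a := fun k => by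
  obtain ⟨f, hf⟩ := Module.Projective.exists_dual_eq_one (ZMod 2) ha
  exact ⟨f.smulRight k, by simp [hf]⟩

lemma exists_linearMap_forall_notMem [Fintype K] {ι : Type*} [Fintype ι] {a : ι → E}
    (ha : ∀ i, a i ≠ 0) {B : ι → Set K} (hB : ∑ i, density (B i) < 1) :
    ∃ r : E →ₗ[ZMod 2] K, ∀ i, r (a i) ∉ B i := by
  have : Finite (E →ₗ[ZMod 2] K) := DFunLike.finite _
  have := Fintype.ofFinite (E →ₗ[ZMod 2] K)
  have bad (i : ι) : density {r : E →ₗ[ZMod 2] K | r (a i) ∈ B i} = density (B i) :=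
    density_preimage_of_surjective
      (f := (LinearMap.applyₗ (R := ZMod 2) (M₂ := K) (a i)).toAddMonoidHom)
      (surjective_eval_linearMap (ha i)) (B i)
  obtain ⟨r, hr⟩ := exists_notMem_of_density_lt_one
    ((density_iUnion_le fun i => {r : E →ₗ[ZMod 2] K | r (a i) ∈ B i}).trans_lt
      (by simpa only [bad]))
  exact ⟨r, fun i hi => hr (Set.mem_iUnion.2 ⟨i, hi⟩)⟩

end Random

section AlmostAdditive

variable {G H : Type*} [AddCommGroup G] [Fintype G] [AddCommGroup H]

lemma exists_forall_add_notMem {ι : Type*} [Fintype ι] {S : Set G} (a : ι → G)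
    (h : Fintype.card ι * density S < 1) : ∃ x, ∀ i, x + a i ∉ S := by
  obtain ⟨x, hx⟩ := exists_notMem_of_density_lt_one
    ((density_iUnion_le fun i => {x | x + a i ∈ S}).trans_lt (by
      simpa [density_preimage_add_right] using h))
  exact ⟨x, fun i hi => hx (Set.mem_iUnion.2 ⟨i, hi⟩)⟩

theorem exists_addMonoidHom_eq_off {B : Set G} (hB : 4 * density B < 1) (f : G → H)
    (hf : ∀ x y, x ∉ B → y ∉ B → x + y ∉ B → f (x + y) = f x + f y) :
    ∃ p : G →+ H, ∀ x ∉ B, p x = f x := by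
  have avoid (a b c d : G) : ∃ x, x + a ∉ B ∧ x + b ∉ B ∧ x + c ∉ B ∧ x + d ∉ B := by
    obtain ⟨x, hx⟩ := exists_forall_add_notMem (S := B) ![a, b, c, d] (by simpa using hB)
    exact ⟨x, hx 0, hx 1, hx 2, hx 3⟩
  have diff_eq {v r s : G} (hr : r ∉ B) (hvr : v + r ∉ B) (hs : s ∉ B) (hvs : v + s ∉ B) :
      f (v + r) - f r = f (v + s) - f s := by
    obtain ⟨z, hz, hrz, hvrz, hw⟩ := avoid 0 r (v + r) (r - s)
    rw [add_zero] at hz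
    set w := z + (r - s) with hwz
    have hws : w + s = z + r := by rw [hwz]; abel
    have hwvs : w + (v + s) = z + (v + r) := by rw [hwz]; abel
    have shift : f z + f r = f w + f s := by
      rw [← hf z r hz hr hrz, ← hf w s hw hs (hws ▸ hrz), hws]
    have shift_add : f z + f (v + r) = f w + f (v + s) := by
      rw [← hf z _ hz hvr hvrz, ← hf w _ hw hvs (hwvs ▸ hvrz), hwvs]
    rw [← add_sub_add_left_eq_sub _ _ (f z), shift, shift_add, add_sub_add_left_eq_sub]
  choose r hr hvr using fun v : G => (avoid 0 v 0 0).imp fun x hx =>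
    (⟨by simpa using hx.1, by simpa [add_comm] using hx.2.1⟩ : x ∉ B ∧ v + x ∉ B)
  refine ⟨AddMonoidHom.mk' (fun v => f (v + r v) - f (r v)) fun u v => ?_, fun x hx => ?_⟩
  · obtain ⟨s, hs, hvs, huvs, -⟩ := avoid 0 v (u + v) 0
    rw [add_zero] at hs
    rw [add_comm s] at hvs huvs
    rw [diff_eq (hr _) (hvr _) hs huvs, diff_eq (hr v) (hvr v) hs hvs,
      diff_eq (v := u) (hr u) (hvr u) hvs (by rwa [← add_assoc]), add_assoc]
    abel
  · obtain ⟨s, hs, hxs, -, -⟩ := avoid 0 x 0 0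
    rw [add_zero] at hs
    rw [add_comm s] at hxs
    change f (x + r x) - f (r x) = f x
    rw [diff_eq (hr x) (hvr x) hs hxs, hf x s hx hs hxs, add_sub_cancel_right]

end AlmostAdditive

section Cubes

variable {K : Type*} [AddCommGroup K] [Fintype K]

lemma expect_density_inter_add (S T : Set K) :
    𝔼 d, density {k | k ∈ S ∧ k + d ∈ T} = density S * density T := by
  have inner (k : K) : density {d | k ∈ S ∧ k + d ∈ T} = S.indicator 1 k * density T := by
    by_cases hk : k ∈ S
    · simp_rw [hk, true_and, add_comm k, density_preimage_add_right]
      simp [hk]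
    · simp [hk, density]
  rw [expect_density_comm, Finset.expect_congr rfl fun k _ => inner k, ← Finset.expect_mul]
  rfl

lemma exists_popular_difference {S D : Set K} {α : ℝ} (hα : 0 < α) (hS : α ≤ density S)
    (hD : density D < α ^ 2 / 2) : ∃ d ∉ D, α ^ 2 / 2 ≤ density {k | k ∈ S ∧ k + d ∈ S} := by
  by_contra! h
  have bound (d : K) : density {k | k ∈ S ∧ k + d ∈ S} ≤ D.indicator 1 d + α ^ 2 / 2 := by
    by_cases hd : d ∈ D
    · rw [Set.indicator_of_mem hd]
      exact (density_le_one _).trans (le_add_of_nonneg_right (by positivity))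
    · rw [Set.indicator_of_notMem hd, zero_add]
      exact (h d hd).le
  have : α ^ 2 < α ^ 2 := calc
    α ^ 2 ≤ density S * density S := by rw [sq]; gcongr; exact density_nonneg S
    _ = 𝔼 d, density {k | k ∈ S ∧ k + d ∈ S} := (expect_density_inter_add S S).symm
    _ ≤ 𝔼 d, (D.indicator 1 d + α ^ 2 / 2) := Finset.expect_le_expect fun d _ => bound d
    _ = density D + α ^ 2 / 2 := by rw [Finset.expect_add_distrib, Fintype.expect_const, density]
    _ < α ^ 2 := by linarith
  exact this.false

lemma injective_coprod_toSpanSingleton {A K : Type*} [AddCommGroup A] [Module (ZMod 2) A]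
    [AddCommGroup K] [Module (ZMod 2) K] {L : A →ₗ[ZMod 2] K} (hL : Injective L) {d : K}
    (hd : d ∉ Set.range L) : Injective (L.coprod (LinearMap.toSpanSingleton (ZMod 2) K d)) := by
  refine (injective_iff_map_eq_zero _).2 fun ⟨a, c⟩ h => ?_
  change L a + c • d = 0 at h
  obtain rfl | rfl := zmod_two_eq_zero_or_eq_one c
  · rw [zero_smul, add_zero] at h
    rw [hL (h.trans (map_zero L).symm), Prod.mk_zero_zero]
  · rw [one_smul] at h
    exact absurd ⟨-a, by rw [map_neg, neg_eq_of_add_eq_zero_right h]⟩ hd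

theorem exists_dense_cube (m : ℕ) {ε : ℝ} (hε : 0 < ε) : ∃ δ > 0, ∃ N : ℝ,
    ∀ (K : Type u) [AddCommGroup K] [Module (ZMod 2) K] [Fintype K] (S : Set K),
      N ≤ Fintype.card K → ε ≤ density S → ∃ L : (Fin m → ZMod 2) →ₗ[ZMod 2] K,
        Injective L ∧ δ ≤ density {k | ∀ w, k + L w ∈ S} := by
  induction m with
  | zero =>
    refine ⟨ε, hε, 0, fun K _ _ _ S _ hS => ⟨0, injective_of_subsingleton _, ?_⟩⟩
    simpa using hS
  | succ m ih =>
    obtain ⟨δ, hδ, N, hN⟩ := ih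
    refine ⟨δ ^ 2 / 2, by positivity, max N (2 ^ m / (δ ^ 2 / 2) + 1), fun K _ _ _ S hK hS => ?_⟩
    obtain ⟨L, hL, hdense⟩ := hN K S (le_of_max_le_left hK) hS
    have hrange : density (Set.range L) < δ ^ 2 / 2 := by
      have hcard : (0 : ℝ) < Fintype.card K := by exact_mod_cast Fintype.card_pos
      have hlt : 2 ^ m / (δ ^ 2 / 2) < Fintype.card K := by linarith [le_of_max_le_right hK]
      rw [div_lt_iff₀ (by positivity)] at hlt
      refine lt_of_mul_lt_mul_left ?_ hcard.le
      rwa [card_mul_density, ← Set.image_univ, Set.ncard_image_of_injective _ hL, Set.ncard_univ,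
        Nat.card_eq_fintype_card, Fintype.card_fun, ZMod.card, Fintype.card_fin, Nat.cast_pow,
        Nat.cast_ofNat]
    obtain ⟨d, hd, hdd⟩ := exists_popular_difference hδ hdense hrange
    let e := (Fin.consLinearEquiv (ZMod 2) fun _ : Fin (m + 1) => ZMod 2).symm.trans
      (LinearEquiv.prodComm (ZMod 2) _ _)
    refine ⟨(L.coprod (LinearMap.toSpanSingleton (ZMod 2) K d)).comp e.toLinearMap,
      (injective_coprod_toSpanSingleton hL hd).comp e.injective, hdd.trans (density_mono ?_)⟩
    rintro k ⟨hk, hkd⟩ w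
    change k + (L (e w).1 + (e w).2 • d) ∈ S
    obtain hw | hw := zmod_two_eq_zero_or_eq_one (e w).2
    · rw [hw, zero_smul, add_zero]
      exact hk _
    · rw [hw, one_smul, add_comm (L _), ← add_assoc]
      exact hkd _

end Cubes

section BoseBurton

variable {A K X : Type*} [AddCommGroup A] [Module (ZMod 2) A] [AddCommGroup K] [Module (ZMod 2) K]
  [AddCommGroup X] [Module (ZMod 2) X]

/-- The set `M` contains the Bose–Burton geometry of `A × K` over the flat `{0} × K`, placed in
`X` by `(a, k) ↦ j a + ι k`. Injectivity in the first coordinate is not part of the structure: it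
is automatic when `0 ∉ M`. -/
structure IsBoseBurton (M : Set X) (j : A →ₗ[ZMod 2] X) (ι : K →ₗ[ZMod 2] X) : Prop where
  injective : Injective ι
  add_mem : ∀ a k, a ≠ 0 → j a + ι k ∈ M

/-- The set `M` contains some Bose–Burton geometry of `A × K` over `{0} × K`. -/
def ContainsBoseBurton (A K : Type*) [AddCommGroup A] [Module (ZMod 2) A] [AddCommGroup K]
    [Module (ZMod 2) K] (M : Set X) : Prop :=
  ∃ (j : A →ₗ[ZMod 2] X) (ι : K →ₗ[ZMod 2] X), IsBoseBurton M j ι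

lemma exists_injective_linearMap_of_card_le [Fintype A] [Fintype K]
    (h : Fintype.card A ≤ Fintype.card K) : ∃ f : A →ₗ[ZMod 2] K, Injective f := by
  rw [Module.card_eq_pow_finrank (K := ZMod 2) (V := A),
    Module.card_eq_pow_finrank (K := ZMod 2) (V := K), ZMod.card,
    Nat.pow_le_pow_iff_right one_lt_two] at h
  exact (finrank_le_iff_exists_linearMap (R := ZMod 2)).1 h

lemma ContainsBoseBurton.of_card_le {A' K' : Type*} [AddCommGroup A'] [Module (ZMod 2) A']
    [AddCommGroup K'] [Module (ZMod 2) K'] [Fintype A] [Fintype A'] [Fintype K] [Fintype K']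
    {M : Set X} (h : ContainsBoseBurton A K M) (hA : Fintype.card A' ≤ Fintype.card A)
    (hK : Fintype.card K' ≤ Fintype.card K) : ContainsBoseBurton A' K' M := by
  obtain ⟨j, ι, hBB⟩ := h
  obtain ⟨f, hf⟩ := exists_injective_linearMap_of_card_le hA
  obtain ⟨g, hg⟩ := exists_injective_linearMap_of_card_le hK
  exact ⟨j.comp f, ι.comp g, hBB.injective.comp hg, fun a k ha =>
    hBB.add_mem _ _ ((map_ne_zero_iff f hf).2 ha)⟩

lemma IsBoseBurton.shear {M : Set X} {j : A →ₗ[ZMod 2] X} {ι : K →ₗ[ZMod 2] X}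
    (h : IsBoseBurton M j ι) (l : A →ₗ[ZMod 2] K) : IsBoseBurton M (j + ι.comp l) ι where
  injective := h.injective
  add_mem a k ha := by
    rw [LinearMap.add_apply, LinearMap.comp_apply, add_assoc, ← map_add]
    exact h.add_mem a _ ha

variable [Fintype K]

/-- In every coset of every Bose–Burton geometry of `M` over the image of `ι`, the translates by
`ι k` of a transversal rarely lie in `M` entirely: the `k` for which they do have density at
most `ε`. -/
def IsSparse (M : Set X) (A : Type*) [AddCommGroup A] [Module (ZMod 2) A] (ι : K →ₗ[ZMod 2] X)
    (ε : ℝ) : Prop :=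
  ∀ j : A →ₗ[ZMod 2] X, IsBoseBurton M j ι → ∀ x, density {k | ∀ a, x + j a + ι k ∈ M} ≤ ε

/-- Many translates in `M` contain an affine cube of translates, which is the new layer of a
Bose–Burton geometry with one more dimension in the first factor. -/
theorem exists_isSparse_of_not_containsBoseBurton (m : ℕ) {ε : ℝ} (hε : 0 < ε) :
    ∃ N : ℝ, ∀ {A : Type*} {K : Type u} {X : Type*} [AddCommGroup A] [Module (ZMod 2) A]
      [AddCommGroup K] [Module (ZMod 2) K] [Fintype K] [AddCommGroup X] [Module (ZMod 2) X]
      {M : Set X} {ι : K →ₗ[ZMod 2] X}, Injective ι → N ≤ Fintype.card K →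
      ¬ ContainsBoseBurton (ZMod 2 × A) (Fin m → ZMod 2) M → IsSparse M A ι ε := by
  obtain ⟨δ, hδ, N, hN⟩ := exists_dense_cube.{u} m hε
  refine ⟨N, fun {A K X} _ _ _ _ _ _ _ M ι hι hK hfree j hBB x => ?_⟩
  by_contra! hdense
  obtain ⟨L, hL, hcube⟩ := hN K _ hK hdense.le
  obtain ⟨k₀, hk₀⟩ := nonempty_of_density_pos (hδ.trans_le hcube)
  refine hfree ⟨(LinearMap.toSpanSingleton (ZMod 2) X (x + ι k₀)).coprod j, ι.comp L,
    hι.comp hL, fun ⟨s, a⟩ w hsa => ?_⟩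
  change s • (x + ι k₀) + j a + ι (L w) ∈ M
  obtain rfl | rfl := zmod_two_eq_zero_or_eq_one s
  · rw [zero_smul, zero_add]
    exact hBB.add_mem a _ fun ha => hsa (by rw [ha, Prod.mk_zero_zero])
  · convert hk₀ w a using 1
    change _ = x + j a + ι (k₀ + L w)
    rw [one_smul, map_add]
    abel

end BoseBurton

section MissDensity

variable {A K X : Type*} [AddCommGroup A] [Module (ZMod 2) A] [AddCommGroup K] [Module (ZMod 2) K]
  [AddCommGroup X] [Module (ZMod 2) X] [Fintype K] {M : Set X} {j : A →ₗ[ZMod 2] X}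
  {ι : K →ₗ[ZMod 2] X}

/-- The proportion of the points of the coset of the image of `ι` through `y` that are missing
from `M`. -/
noncomputable def missDensity (M : Set X) (ι : K →ₗ[ZMod 2] X) (y : X) : ℝ :=
  density {k | y + ι k ∉ M}

lemma missDensity_nonneg (M : Set X) (ι : K →ₗ[ZMod 2] X) (y : X) : 0 ≤ missDensity M ι y :=
  density_nonneg _

@[simp]
lemma missDensity_add_apply (M : Set X) (ι : K →ₗ[ZMod 2] X) (y : X) (k : K) :
    missDensity M ι (y + ι k) = missDensity M ι y := by
  simp only [missDensity, add_assoc, ← map_add, add_comm k]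
  exact density_preimage_add_right {k | y + ι k ∉ M} k

lemma IsBoseBurton.missDensity_eq_zero (h : IsBoseBurton M j ι) {a : A} (ha : a ≠ 0) :
    missDensity M ι (j a) = 0 := by
  simp [missDensity, density, h.add_mem a _ ha]

lemma expect_density_coset [Fintype X] (ι : K →ₗ[ZMod 2] X) (S : Set X) :
    𝔼 x, density {k | x + ι k ∈ S} = density S := by
  rw [expect_density_comm]
  simp_rw [density_preimage_add_right, Fintype.expect_const]

lemma expect_missDensity [Fintype X] (M : Set X) (ι : K →ₗ[ZMod 2] X) :
    𝔼 x, missDensity M ι x = density Mᶜ :=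
  expect_density_coset ι Mᶜ

lemma IsSparse.le_density_iUnion {ε : ℝ} (hs : IsSparse M A ι ε) (h : IsBoseBurton M j ι) (x : X) :
    1 - ε ≤ density (⋃ a, {k | x + j a + ι k ∉ M}) := by
  have hcompl : {k | ∀ a, x + j a + ι k ∈ M}ᶜ = ⋃ a, {k | x + j a + ι k ∉ M} := by
    ext k; simp
  rw [← hcompl, density_compl]
  linarith [hs j h x]

variable [Fintype A]

/-- The total over `a : A` of the proportions of the cosets of the image of `ι` through `x + j a`
that are missing from `M`. -/
noncomputable def totalMiss (M : Set X) (j : A →ₗ[ZMod 2] X) (ι : K →ₗ[ZMod 2] X) (x : X) : ℝ :=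
  ∑ a, missDensity M ι (x + j a)

@[simp]
lemma totalMiss_add_apply_left (M : Set X) (j : A →ₗ[ZMod 2] X) (ι : K →ₗ[ZMod 2] X) (x : X)
    (a : A) : totalMiss M j ι (x + j a) = totalMiss M j ι x := by
  simp only [totalMiss, add_assoc, ← map_add]
  exact Equiv.sum_comp (Equiv.addLeft a) fun b => missDensity M ι (x + j b)

@[simp]
lemma totalMiss_add_apply_right (M : Set X) (j : A →ₗ[ZMod 2] X) (ι : K →ₗ[ZMod 2] X) (x : X)
    (k : K) : totalMiss M j ι (x + ι k) = totalMiss M j ι x := by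
  simp only [totalMiss, add_right_comm _ (ι k), missDensity_add_apply]

lemma totalMiss_shear (M : Set X) (j : A →ₗ[ZMod 2] X) (ι : K →ₗ[ZMod 2] X) (l : A →ₗ[ZMod 2] K)
    (x : X) : totalMiss M (j + ι.comp l) ι x = totalMiss M j ι x := by
  simp only [totalMiss, LinearMap.add_apply, LinearMap.comp_apply, ← add_assoc,
    missDensity_add_apply]

lemma expect_totalMiss [Fintype X] (M : Set X) (j : A →ₗ[ZMod 2] X) (ι : K →ₗ[ZMod 2] X) :
    𝔼 x, totalMiss M j ι x = Fintype.card A * density Mᶜ := by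
  have shift (a : A) : 𝔼 x, missDensity M ι (x + j a) = density Mᶜ :=
    (Fintype.expect_equiv (Equiv.addRight (j a)) _ _ fun _ => rfl).trans (expect_missDensity M ι)
  simp only [totalMiss, Finset.expect_sum_comm, shift, Finset.sum_const, Finset.card_univ,
    nsmul_eq_mul]

lemma IsSparse.le_totalMiss {ε : ℝ} (hs : IsSparse M A ι ε) (h : IsBoseBurton M j ι) (x : X) :
    1 - ε ≤ totalMiss M j ι x :=
  (hs.le_density_iUnion h x).trans (density_iUnion_le _)

lemma IsSparse.le_card_mul_density [Fintype X] {ε : ℝ} (hs : IsSparse M A ι ε)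
    (h : IsBoseBurton M j ι) : 1 - ε ≤ Fintype.card A * density Mᶜ := by
  rw [← expect_totalMiss M j ι]
  exact Finset.le_expect Finset.univ_nonempty fun x _ => hs.le_totalMiss h x

lemma IsSparse.density_inter_le {ε : ℝ} (hs : IsSparse M A ι ε) (h : IsBoseBurton M j ι) (x : X)
    {c : A} (hc : c ≠ 0) :
    density {k | x + ι k ∉ M ∧ x + j c + ι k ∉ M} ≤ totalMiss M j ι x - (1 - ε) := by
  have hpair := density_inter_add_density_iUnion_le (fun a => {k | x + j a + ι k ∉ M}) hc.symm
  simp only [map_zero, add_zero] at hpair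
  exact le_sub_iff_add_le.2 ((add_le_add_right (hs.le_density_iUnion h x) _).trans hpair)

/-- Shearing by a random vector makes the gaps of `M` in two different cosets independent. -/
theorem IsSparse.missDensity_mul_le {ε : ℝ} (hs : IsSparse M A ι ε) (h : IsBoseBurton M j ι)
    (x : X) {c : A} (hc : c ≠ 0) :
    missDensity M ι x * missDensity M ι (x + j c) ≤ totalMiss M j ι x - (1 - ε) := by
  obtain ⟨f, hf⟩ := Module.Projective.exists_dual_eq_one (ZMod 2) hc
  rw [missDensity, missDensity, ← expect_density_inter_add]
  refine Finset.expect_le Finset.univ_nonempty fun u _ => ?_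
  have hshear (k : K) : x + j c + ι (k + u) = x + (j + ι.comp (f.smulRight u)) c + ι k := by
    simp only [LinearMap.add_apply, LinearMap.comp_apply, LinearMap.smulRight_apply, hf, one_smul,
      map_add]
    abel
  have := hs.density_inter_le (h.shear (f.smulRight u)) x hc
  rw [totalMiss_shear] at this
  simpa only [Set.mem_ofPred_eq, hshear] using this

end MissDensity

section ErdosStone

lemma card_fin_zmod_two (n : ℕ) : Fintype.card (Fin n → ZMod 2) = 2 ^ n := by
  rw [Fintype.card_fun, ZMod.card, Fintype.card_fin]

theorem exists_containsBoseBurton_of_density_compl_le (t m : ℕ) {ε : ℝ} (hε : 0 < ε) : ∃ N : ℝ,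
    ∀ {X : Type u} [AddCommGroup X] [Module (ZMod 2) X] [Fintype X] {M : Set X},
      N ≤ Fintype.card X → 2 ^ t * density Mᶜ ≤ 2 - ε →
      ContainsBoseBurton (Fin t → ZMod 2) (Fin m → ZMod 2) M := by
  induction t generalizing m ε with
  | zero =>
    refine ⟨2 ^ m, fun {X} _ _ _ M hX _ => ?_⟩
    obtain ⟨ι, hι⟩ := exists_injective_linearMap_of_card_le (A := Fin m → ZMod 2) (K := X)
      (by rw [card_fin_zmod_two]; exact_mod_cast hX)
    exact ⟨0, ι, hι, fun a _ ha => absurd (Subsingleton.elim a 0) ha⟩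
  | succ t ih =>
    obtain ⟨n, hn⟩ := exists_isSparse_of_not_containsBoseBurton.{0} m (by positivity : 0 < ε / 4)
    obtain ⟨k, hk⟩ := exists_nat_ge n
    obtain ⟨N, hN⟩ := ih k one_pos
    refine ⟨N, fun {X} _ _ _ M hX hM => ?_⟩
    rw [pow_succ] at hM
    obtain ⟨j, ι, hBB⟩ := hN (M := M) hX (by linarith)
    by_contra hfree
    have hs := hn (A := Fin t → ZMod 2) hBB.injective
      (hk.trans (by rw [card_fin_zmod_two]; exact_mod_cast Nat.lt_two_pow_self.le))
      fun h => hfree (h.of_card_le (by simp [pow_succ']) le_rfl)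
    have := hs.le_card_mul_density hBB
    rw [card_fin_zmod_two, Nat.cast_pow, Nat.cast_ofNat] at this
    linarith

end ErdosStone

section Centers

lemma exists_dominant {α : Type*} [Fintype α] [Nonempty α] {p : α → ℝ}
    (hp : ∀ a, 0 ≤ p a) {θ : ℝ} (hθ : 0 ≤ θ) (h : ∀ a b, a ≠ b → p a * p b ≤ θ) :
    ∃ a, (∑ b, p b) * (∑ b, p b - p a) ≤ Fintype.card α ^ 2 * θ := by
  obtain ⟨a, -, ha⟩ := Finset.exists_max_image Finset.univ p Finset.univ_nonempty
  refine ⟨a, ?_⟩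
  have term (b c : α) : p b * p c ≤ (if b = c then p b * p a else 0) + θ := by
    obtain rfl | hbc := eq_or_ne b c
    · rw [if_pos rfl]
      linarith [mul_le_mul_of_nonneg_left (ha b (Finset.mem_univ b)) (hp b)]
    · rw [if_neg hbc, zero_add]
      exact h b c hbc
  have : (∑ b, p b) * ∑ b, p b ≤ (∑ b, p b) * p a + Fintype.card α ^ 2 * θ := calc
    (∑ b, p b) * ∑ b, p b = ∑ b, ∑ c, p b * p c := Finset.sum_mul_sum ..
    _ ≤ ∑ b, ∑ c, ((if b = c then p b * p a else 0) + θ) :=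
      Finset.sum_le_sum fun b _ => Finset.sum_le_sum fun c _ => term b c
    _ = (∑ b, p b) * p a + Fintype.card α ^ 2 * θ := by
      simp [Finset.sum_add_distrib, Finset.sum_mul, sq, mul_assoc]
  linarith

variable {A K X : Type*} [AddCommGroup A] [Module (ZMod 2) A] [AddCommGroup K] [Module (ZMod 2) K]
  [AddCommGroup X] [Module (ZMod 2) X] [Fintype K] {M : Set X} {j : A →ₗ[ZMod 2] X}
  {ι : K →ₗ[ZMod 2] X} {ρ η : ℝ} {x y : X}

/-- The coset of the image of `ι` through `y` is mostly missing from `M`, while its translates by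
the nonzero `j a` are almost contained in `M`. -/
structure IsCenter (M : Set X) (j : A →ₗ[ZMod 2] X) (ι : K →ₗ[ZMod 2] X) (η : ℝ) (y : X) :
    Prop where
  lt_missDensity : 1 / 2 < missDensity M ι y
  missDensity_le : ∀ a, a ≠ 0 → missDensity M ι (y + j a) ≤ η

lemma IsCenter.eq_of_add (hη : η ≤ 1 / 2) {a b : A} (ha : IsCenter M j ι η (y + j a))
    (hb : IsCenter M j ι η (y + j b)) : a = b := by
  by_contra hab
  have := ha.missDensity_le (b - a) (sub_ne_zero.2 (Ne.symm hab))
  rw [add_assoc, ← map_add, add_sub_cancel] at this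
  linarith [hb.lt_missDensity]

lemma IsCenter.of_add_apply {k : K} (h : IsCenter M j ι η (y + ι k)) : IsCenter M j ι η y where
  lt_missDensity := by simpa only [missDensity_add_apply] using h.lt_missDensity
  missDensity_le a ha := by
    simpa only [add_right_comm _ (ι k), missDensity_add_apply] using h.missDensity_le a ha

lemma IsSparse.exists_isCenter [Fintype A] (hs : IsSparse M A ι (ρ ^ 2)) (h : IsBoseBurton M j ι)
    (hρ : 0 ≤ ρ) (hρA : 16 * Fintype.card A ^ 2 * ρ ≤ 1) (hx : totalMiss M j ι x ≤ 1 + ρ) :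
    ∃ a, IsCenter M j ι (2 * Fintype.card A ^ 2 * ρ) (x + j a) := by
  have hA : (1 : ℝ) ≤ Fintype.card A ^ 2 := one_le_pow₀ (by exact_mod_cast Fintype.card_pos)
  have hρ16 : 16 * ρ ≤ 1 := by nlinarith
  have pair (a b : A) (hab : a ≠ b) :
      missDensity M ι (x + j a) * missDensity M ι (x + j b) ≤ ρ + ρ ^ 2 := by
    have := hs.missDensity_mul_le h (x + j a) (sub_ne_zero.2 hab.symm)
    rw [totalMiss_add_apply_left, add_assoc, ← map_add, add_sub_cancel] at this
    linarith
  obtain ⟨a, ha⟩ := exists_dominant (fun a => missDensity_nonneg M ι (x + j a)) (by positivity) pair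
  have htotal := hs.le_totalMiss h x
  rw [← totalMiss] at ha
  have hrest : totalMiss M j ι x - missDensity M ι (x + j a) ≤ 2 * Fintype.card A ^ 2 * ρ := by
    refine le_of_mul_le_mul_left (ha.trans ?_) (by nlinarith : 0 < totalMiss M j ι x)
    have : 1 + ρ ≤ 2 * totalMiss M j ι x := by nlinarith
    calc Fintype.card A ^ 2 * (ρ + ρ ^ 2) = Fintype.card A ^ 2 * ρ * (1 + ρ) := by ring
      _ ≤ Fintype.card A ^ 2 * ρ * (2 * totalMiss M j ι x) := by gcongr
      _ = totalMiss M j ι x * (2 * Fintype.card A ^ 2 * ρ) := by ring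
  refine ⟨a, by nlinarith, fun b hb => ?_⟩
  have : missDensity M ι (x + j a) + missDensity M ι (x + j (a + b)) ≤ totalMiss M j ι x :=
    Finset.add_le_sum (f := fun c => missDensity M ι (x + j c)) (fun _ _ => missDensity_nonneg ..)
      (Finset.mem_univ a) (Finset.mem_univ (a + b)) (by simpa using hb)
  rw [add_assoc, ← map_add]
  linarith

end Centers

section Stability

variable {A B P K X : Type*} [AddCommGroup A] [Module (ZMod 2) A] [AddCommGroup K]
  [Module (ZMod 2) K] [AddCommGroup X] [Module (ZMod 2) X] [AddCommGroup B] [Module (ZMod 2) B]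
  [AddCommGroup P] [Module (ZMod 2) P] [Fintype K]
  {M : Set X} {j : A →ₗ[ZMod 2] X} {ι : K →ₗ[ZMod 2] X} {ρ η : ℝ} {y z : X}

lemma containsBoseBurton_of_missDensity_le [Fintype P] [Fintype B] (p : P →ₗ[ZMod 2] X)
    (hp : ∀ a, a ≠ 0 → missDensity M ι (p a) ≤ η)
    (hη : Fintype.card P * Fintype.card B * η < 1) (hη₀ : 0 ≤ η) (hι : Injective ι)
    (hBK : Fintype.card B ≤ Fintype.card K) : ContainsBoseBurton P B M := by
  obtain ⟨i, hi⟩ := exists_injective_linearMap_of_card_le hBK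
  have hsum : ∑ s : {a : P // a ≠ 0} × B, density {k | p s.1 + ι (k + i s.2) ∉ M} < 1 := calc
    _ ≤ ∑ _ : {a : P // a ≠ 0} × B, η := Finset.sum_le_sum fun s _ =>
      (density_preimage_add_right {k | p s.1 + ι k ∉ M} (i s.2)).trans_le (hp s.1 s.1.2)
    _ ≤ Fintype.card P * Fintype.card B * η := by
      rw [Finset.sum_const, Finset.card_univ, Fintype.card_prod, nsmul_eq_mul, Nat.cast_mul]
      gcongr
      exact Fintype.card_subtype_le _
    _ < 1 := hη
  obtain ⟨r, hr⟩ := exists_linearMap_forall_notMem (a := fun s : {a : P // a ≠ 0} × B => s.1.1)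
    (fun s => s.1.2) hsum
  refine ⟨p + ι.comp r, ι.comp i, hι.comp hi, fun a b ha => ?_⟩
  have := not_not.1 (hr (⟨a, ha⟩, b))
  simpa only [LinearMap.add_apply, LinearMap.comp_apply, add_assoc, ← map_add] using this

/-- If `c ≠ 0`, then `y`, `z` and `M` would give a Bose–Burton geometry with one more dimension:
the functional `f` with `f c = 1` twists the obvious map so that it never meets a center. -/
theorem IsCenter.eq_zero_of_add_add [Fintype A] [Fintype B] (h : IsBoseBurton M j ι)
    (hy : IsCenter M j ι η y) (hz : IsCenter M j ι η z) {c : A}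
    (hyz : IsCenter M j ι η (y + z + j c)) (hη₀ : 0 ≤ η)
    (hη : 2 * Fintype.card A * Fintype.card B * η < 1) (hBK : Fintype.card B ≤ Fintype.card K)
    (hfree : ¬ ContainsBoseBurton (ZMod 2 × A) B M) : c = 0 := by
  by_contra hc
  obtain ⟨f, hf⟩ := Module.Projective.exists_dual_eq_one (ZMod 2) hc
  refine hfree (containsBoseBurton_of_missDensity_le
    ((LinearMap.toSpanSingleton (ZMod 2) X (y + z)).coprod (j + f.smulRight y))
    (fun ⟨s, a⟩ hsa => ?_) (by simpa using hη) hη₀ h.injective hBK)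
  change missDensity M ι (s • (y + z) + (j a + f a • y)) ≤ η
  obtain rfl | rfl := zmod_two_eq_zero_or_eq_one s <;>
    obtain hfa | hfa := zmod_two_eq_zero_or_eq_one (f a) <;>
    simp only [hfa, zero_smul, one_smul, add_zero, zero_add]
  · refine (h.missDensity_eq_zero fun ha => hsa ?_).trans_le hη₀
    rw [ha, Prod.mk_zero_zero]
  · rw [add_comm]
    exact hy.missDensity_le a fun ha => hsa (by rw [ha, Prod.mk_zero_zero])
  · have := hyz.missDensity_le (a - c) fun hac => by simp [sub_eq_zero.1 hac, hf] at hfa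
    rwa [add_assoc _ (j c), ← map_add, add_sub_cancel] at this
  · have := hz.missDensity_le a fun ha => by simp [ha] at hfa
    rwa [show y + z + (j a + y) = z + j a + (y + y) by abel, ZModModule.add_self, add_zero]

lemma IsSparse.density_totalMiss_gt_le [Fintype X] [Fintype A] (hs : IsSparse M A ι (ρ ^ 2))
    (h : IsBoseBurton M j ι) (hρ : 0 < ρ) (hM : Fintype.card A * density Mᶜ ≤ 1) :
    density {x | 1 + ρ < totalMiss M j ι x} ≤ ρ := by
  have markov := mul_density_le_expect
    (fun x => sub_nonneg.2 (hs.le_totalMiss h x)) (ρ + ρ ^ 2)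
  rw [Finset.expect_sub_distrib, expect_totalMiss, Fintype.expect_const] at markov
  have hsub : {x | 1 + ρ < totalMiss M j ι x} ⊆
      {x | ρ + ρ ^ 2 ≤ totalMiss M j ι x - (1 - ρ ^ 2)} := fun x (hx : 1 + ρ < _) =>
    show ρ + ρ ^ 2 ≤ totalMiss M j ι x - (1 - ρ ^ 2) by linarith
  have hle : (ρ + ρ ^ 2) * density {x | 1 + ρ < totalMiss M j ι x} ≤ (ρ + ρ ^ 2) * ρ := calc
    _ ≤ Fintype.card A * density Mᶜ - (1 - ρ ^ 2) :=
      (mul_le_mul_of_nonneg_left (density_mono hsub) (by positivity)).trans markov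
    _ ≤ (ρ + ρ ^ 2) * ρ := by nlinarith
  exact le_of_mul_le_mul_left hle (by positivity)

lemma density_ne_zero_and_notMem_le [Fintype X] {p : X →ₗ[ZMod 2] P} (hp : ∀ k, p (ι k) = 0)
    {S : Set X} (hS : ∀ x ∉ S, p x ≠ 0 → missDensity M ι x ≤ η) (hη : 0 ≤ η) :
    density {x | p x ≠ 0 ∧ x ∉ M} ≤ density S + η := by
  have pointwise (x : X) : density {k | x + ι k ∈ {x | p x ≠ 0 ∧ x ∉ M}} ≤ S.indicator 1 x + η := by
    simp only [Set.mem_ofPred_eq, map_add, hp, add_zero]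
    by_cases hpx : p x = 0
    · simp only [hpx, ne_eq, not_true_eq_false, false_and, Set.ofPred_false, density,
        Set.indicator_empty, Finset.expect_const_zero]
      exact add_nonneg (Set.indicator_nonneg (fun _ _ => zero_le_one) x) hη
    by_cases hx : x ∈ S
    · rw [Set.indicator_of_mem hx]
      exact (density_le_one _).trans (le_add_of_nonneg_right hη)
    · rw [Set.indicator_of_notMem hx, zero_add]
      simpa only [missDensity, ne_eq, hpx, not_false_eq_true, true_and] using hS x hx hpx
  calc _ = 𝔼 x, density {k | x + ι k ∈ {x | p x ≠ 0 ∧ x ∉ M}} := (expect_density_coset ι _).symm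
    _ ≤ 𝔼 x, (S.indicator 1 x + η) := Finset.expect_le_expect fun x _ => pointwise x
    _ = density S + η := by rw [Finset.expect_add_distrib, Fintype.expect_const, density]

lemma exists_linearMap_isCenter [Fintype X] [Fintype A] [Fintype B] {S : Set X}
    (hS : 4 * density S < 1) (hcenter : ∀ x ∉ S, ∃ a, IsCenter M j ι η (x + j a))
    (h : IsBoseBurton M j ι) (hη₀ : 0 ≤ η)
    (hη : 2 * Fintype.card A * Fintype.card B * η < 1) (hBK : Fintype.card B ≤ Fintype.card K)
    (hfree : ¬ ContainsBoseBurton (ZMod 2 × A) B M) :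
    ∃ p : X →ₗ[ZMod 2] A, ∀ x ∉ S, IsCenter M j ι η (x + j (p x)) := by
  choose! f hf using hcenter
  obtain ⟨p, hp⟩ := exists_addMonoidHom_eq_off hS f fun x y hx hy hxy => by
    refine sub_eq_zero.1 ((hf x hx).eq_zero_of_add_add h (hf y hy) (c := f (x + y) - (f x + f y))
      ?_ hη₀ hη hBK hfree)
    convert hf _ hxy using 1
    rw [map_sub, map_add]
    abel
  refine ⟨p.toZModLinearMap 2, fun x hx => ?_⟩
  rw [AddMonoidHom.coe_toZModLinearMap, hp x hx]
  exact hf x hx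

lemma apply_eq_of_isCenter {p : X →ₗ[ZMod 2] A} (hη : η ≤ 1 / 2) {x : X} {a : A}
    (hx : IsCenter M j ι η (x + j (p x)))
    (hxa : IsCenter M j ι η (x + j a + j (p (x + j a)))) : p (j a) = a := by
  have := hx.eq_of_add hη (b := a + p (x + j a)) (by rwa [map_add, ← add_assoc])
  rw [map_add, add_left_comm, left_eq_add, add_eq_zero_iff_eq_neg, ZModModule.neg_eq_self] at this
  exact this.symm

lemma apply_eq_zero_of_isCenter {p : X →ₗ[ZMod 2] A} (hη : η ≤ 1 / 2) {x : X} {k : K}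
    (hx : IsCenter M j ι η (x + j (p x)))
    (hxk : IsCenter M j ι η (x + ι k + j (p (x + ι k)))) : p (ι k) = 0 := by
  have := hx.eq_of_add hη (IsCenter.of_add_apply (k := k) (by rwa [add_right_comm]))
  rwa [map_add, left_eq_add] at this

theorem IsSparse.exists_linearMap_density_le [Fintype X] [Fintype A] [Fintype B]
    (hs : IsSparse M A ι (ρ ^ 2)) (h : IsBoseBurton M j ι) (hρ : 0 < ρ)
    (hρA : 16 * Fintype.card A ^ 3 * Fintype.card B * ρ ≤ 1)
    (hM : Fintype.card A * density Mᶜ ≤ 1) (hBK : Fintype.card B ≤ Fintype.card K)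
    (hfree : ¬ ContainsBoseBurton (ZMod 2 × A) B M) :
    ∃ p : X →ₗ[ZMod 2] A, Surjective p ∧
      density {x | p x ≠ 0 ∧ x ∉ M} ≤ 3 * Fintype.card A ^ 2 * ρ := by
  set η : ℝ := 2 * Fintype.card A ^ 2 * ρ with hη
  set S : Set X := {x | 1 + ρ < totalMiss M j ι x} with hS
  have hA : (1 : ℝ) ≤ Fintype.card A := by exact_mod_cast Fintype.card_pos
  have hA2 : (1 : ℝ) ≤ Fintype.card A ^ 2 := one_le_pow₀ hA
  have hAB : (1 : ℝ) ≤ Fintype.card A * Fintype.card B :=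
    one_le_mul_of_one_le_of_one_le hA (by exact_mod_cast Fintype.card_pos)
  have hηAB : 8 * (Fintype.card A * Fintype.card B) * η ≤ 1 := by rw [hη]; linarith
  have hη8 : 8 * η ≤ 1 := by nlinarith [hηAB, show 0 ≤ η by positivity]
  have hρη : 2 * ρ ≤ η := by nlinarith
  have hSρ : density S ≤ ρ := hs.density_totalMiss_gt_le h hρ hM
  obtain ⟨p, hp⟩ := exists_linearMap_isCenter (by linarith : 4 * density S < 1)
    (fun x hx => hs.exists_isCenter h hρ.le (by linarith) (not_lt.1 hx)) h (by positivity)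
    (by nlinarith) hBK hfree
  obtain ⟨x, hx⟩ := exists_notMem_of_density_lt_one (by linarith : density S < 1)
  have hpj (a : A) : p (j a) = a := apply_eq_of_isCenter (by linarith) (hp x hx) <|
    hp _ (by simpa only [hS, Set.mem_ofPred_eq, totalMiss_add_apply_left])
  have hpι (k : K) : p (ι k) = 0 := apply_eq_zero_of_isCenter (by linarith) (hp x hx) <|
    hp _ (by simpa only [hS, Set.mem_ofPred_eq, totalMiss_add_apply_right])
  refine ⟨p, fun a => ⟨j a, hpj a⟩, (density_ne_zero_and_notMem_le (S := S) (η := η) hpι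
    (fun x hx hpx => ?_) (by positivity)).trans (by nlinarith)⟩
  have := (hp x hx).missDensity_le (p x) hpx
  rwa [add_assoc, ZModModule.add_self, add_zero] at this

theorem exists_linearMap_density_le_of_not_containsBoseBurton (t m : ℕ) {ε : ℝ} (hε : 0 < ε) :
    ∃ N : ℝ, ∀ {X : Type u} [AddCommGroup X] [Module (ZMod 2) X] [Fintype X] {M : Set X},
      N ≤ Fintype.card X → 2 ^ t * density Mᶜ ≤ 1 →
      ¬ ContainsBoseBurton (Fin (t + 1) → ZMod 2) (Fin m → ZMod 2) M →
      ∃ p : X →ₗ[ZMod 2] (Fin t → ZMod 2), Surjective p ∧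
        density {x | p x ≠ 0 ∧ x ∉ M} ≤ ε := by
  obtain ⟨ρ, hρ, hρε, hρm⟩ : ∃ ρ : ℝ, 0 < ρ ∧ 3 * (2 ^ t) ^ 2 * ρ ≤ ε ∧
      16 * (2 ^ t) ^ 3 * 2 ^ m * ρ ≤ 1 := by
    refine ⟨min (ε / (3 * (2 ^ t) ^ 2)) (1 / (16 * (2 ^ t) ^ 3 * 2 ^ m)), by positivity, ?_, ?_⟩
    · exact (le_div_iff₀' (by positivity)).1 (min_le_left _ _)
    · exact (le_div_iff₀' (by positivity)).1 (min_le_right _ _)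
  obtain ⟨n, hn⟩ := exists_isSparse_of_not_containsBoseBurton.{0} m (by positivity : 0 < ρ ^ 2)
  obtain ⟨k, hk⟩ := exists_nat_ge (max n m)
  rw [max_le_iff, Nat.cast_le] at hk
  obtain ⟨N, hN⟩ := exists_containsBoseBurton_of_density_compl_le t k one_pos
  refine ⟨N, fun {X} _ _ _ M hX hM hfree => ?_⟩
  obtain ⟨j, ι, hBB⟩ := hN (M := M) hX (by linarith)
  have hfree' : ¬ ContainsBoseBurton (ZMod 2 × (Fin t → ZMod 2)) (Fin m → ZMod 2) M :=
    fun h => hfree (h.of_card_le (by simp [pow_succ']) le_rfl)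
  have hs := hn hBB.injective
    (hk.1.trans (by rw [card_fin_zmod_two]; exact_mod_cast Nat.lt_two_pow_self.le)) hfree'
  obtain ⟨p, hp, hpM⟩ := hs.exists_linearMap_density_le hBB hρ
    (by simpa only [card_fin_zmod_two, Nat.cast_pow, Nat.cast_ofNat] using hρm)
    (by simpa only [card_fin_zmod_two, Nat.cast_pow, Nat.cast_ofNat] using hM)
    (by rw [card_fin_zmod_two, card_fin_zmod_two]; gcongr; exacts [one_le_two, hk.2]) hfree'
  rw [card_fin_zmod_two, Nat.cast_pow, Nat.cast_ofNat] at hpM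
  exact ⟨p, hp, hpM.trans hρε⟩

end Stability

section LinearExtension

variable {F ι V W : Type*} [Field F] [AddCommGroup V] [Module F V] [AddCommGroup W] [Module F W]

lemma exists_linearMap_apply_eq_of_linearIndependent {v : ι → V} (hv : LinearIndependent F v)
    (f : ι → W) : ∃ a : V →ₗ[F] W, ∀ i, a (v i) = f i := by
  obtain ⟨a, ha⟩ := LinearMap.exists_extend ((Module.Basis.span hv).constr F f)
  refine ⟨a, fun i => ?_⟩
  have := LinearMap.congr_fun ha (Module.Basis.span hv i)
  rwa [LinearMap.comp_apply, Module.Basis.constr_basis, Submodule.subtype_apply,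
    Module.Basis.span_apply] at this

end LinearExtension

section Restrictions

variable {A E X Y : Type*} [AddCommGroup A] [Module (ZMod 2) A] [AddCommGroup E] [Module (ZMod 2) E]
  [AddCommGroup X] [Module (ZMod 2) X] [AddCommGroup Y] [Module (ZMod 2) Y] {N J : Set E}
  {M : Set X}

/-- The set `N` is disjoint from the kernel of some linear map to `A`; that is, its critical number
is at most the dimension of `A`. -/
def HasCriticalMap (A : Type*) [AddCommGroup A] [Module (ZMod 2) A] (N : Set E) : Prop :=
  ∃ φ : E →ₗ[ZMod 2] A, ∀ x ∈ N, φ x ≠ 0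

lemma HasCriticalMap.of_card_le [Fintype A] {A' : Type*} [AddCommGroup A'] [Module (ZMod 2) A']
    [Fintype A'] (h : HasCriticalMap A N) (hA : Fintype.card A ≤ Fintype.card A') :
    HasCriticalMap A' N := by
  obtain ⟨φ, hφ⟩ := h
  obtain ⟨i, hi⟩ := exists_injective_linearMap_of_card_le hA
  exact ⟨i.comp φ, fun x hx => (map_ne_zero_iff i hi).2 (hφ x hx)⟩

lemma HasCriticalMap.of_diff (hJ : LinearIndepOn (ZMod 2) id J) (h : HasCriticalMap A (N \ J)) :
    HasCriticalMap (ZMod 2 × A) N := by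
  obtain ⟨φ, hφ⟩ := h
  obtain ⟨f, hf⟩ := exists_linearMap_apply_eq_of_linearIndependent hJ fun _ => (1 : ZMod 2)
  refine ⟨f.prod φ, fun x hx h0 => ?_⟩
  rw [LinearMap.prod_apply, Function.prod_apply, Prod.mk_eq_zero] at h0
  by_cases hxJ : x ∈ J
  · exact one_ne_zero ((hf ⟨x, hxJ⟩).symm.trans h0.1)
  · exact hφ x ⟨hx, hxJ⟩ h0.2

lemma HasCriticalMap.hasRestriction (hN : HasCriticalMap A N) (h : ContainsBoseBurton A E M)
    (h0 : 0 ∉ M) : HasRestriction N M := by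
  obtain ⟨φ, hφ⟩ := hN
  obtain ⟨j, ι, h⟩ := h
  refine ⟨j.comp φ + ι, (injective_iff_map_eq_zero _).2 fun x hx => ?_,
    Set.image_subset_iff.2 fun x hx => h.add_mem _ x (hφ x hx)⟩
  rw [LinearMap.add_apply, LinearMap.comp_apply] at hx
  have hφx : φ x = 0 := by
    by_contra hφx
    exact h0 (hx ▸ h.add_mem _ x hφx)
  rw [hφx, map_zero, zero_add] at hx
  exact (map_eq_zero_iff ι h.injective).1 hx

/-- For some linear map `b` to `A`, the part of `N` in the kernel of `b` is isomorphic to a subset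
of `D`. The isomorphism is encoded as a linear map `a` on the whole space, which only needs to be
injective on the span of that part. -/
def HasKernelRestriction (A : Type*) [AddCommGroup A] [Module (ZMod 2) A] (N : Set E) (D : Set X) :
    Prop :=
  ∃ (b : E →ₗ[ZMod 2] A) (a : E →ₗ[ZMod 2] X),
    Set.InjOn a (Submodule.span (ZMod 2) {x ∈ N | b x = 0}) ∧ Set.MapsTo a {x ∈ N | b x = 0} D

lemma HasKernelRestriction.hasCriticalMap (h : HasKernelRestriction A N (∅ : Set X)) :
    HasCriticalMap A N :=
  let ⟨b, _, _, ha⟩ := h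
  ⟨b, fun _ hx hbx => ha ⟨hx, hbx⟩⟩

lemma HasKernelRestriction.of_image {D : Set X} {f : X →ₗ[ZMod 2] Y} (hf : Injective f)
    (h : HasKernelRestriction A N (f '' D)) : HasKernelRestriction A N D := by
  obtain ⟨b, a, hinj, hmaps⟩ := h
  obtain ⟨g, hg⟩ := LinearMap.exists_leftInverse_of_injective f (LinearMap.ker_eq_bot.2 hf)
  replace hg (x : X) : g (f x) = x := LinearMap.congr_fun hg x
  have hrange : Set.MapsTo a (Submodule.span (ZMod 2) {x ∈ N | b x = 0}) f.range :=
    Submodule.span_le (p := f.range.comap a).2 fun x hx =>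
      Set.image_subset_range f D (hmaps hx)
  have hginj : Set.InjOn g f.range := by
    rintro _ ⟨x, rfl⟩ _ ⟨y, rfl⟩ hxy
    rw [hg, hg] at hxy
    rw [hxy]
  refine ⟨b, g.comp a, hginj.comp hinj hrange, fun x hx => ?_⟩
  obtain ⟨y, hy, hyx⟩ := hmaps hx
  rwa [LinearMap.comp_apply, ← hyx, hg]

lemma HasRestriction.hasKernelRestriction {D : Set X}
    (h : HasRestriction N {v : A × X | v.1 ≠ 0 ∨ v.2 ∈ D}) : HasKernelRestriction A N D := by
  obtain ⟨ψ, hψ, hsub⟩ := h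
  refine ⟨(LinearMap.fst (ZMod 2) A X).comp ψ, (LinearMap.snd (ZMod 2) A X).comp ψ, ?_, ?_⟩
  · have hker : Submodule.span (ZMod 2) {x ∈ N | ((LinearMap.fst (ZMod 2) A X).comp ψ) x = 0} ≤
        ((LinearMap.fst (ZMod 2) A X).comp ψ).ker := Submodule.span_le.2 fun x hx => hx.2
    exact fun x hx y hy hxy => hψ (Prod.ext ((hker hx).trans (hker hy).symm) hxy)
  · rintro x ⟨hx, hbx⟩
    exact (hsub ⟨x, hx, rfl⟩).resolve_left (not_not.2 hbx)

lemma exists_linearIndependent_mem [Finite X] {D : Set X} (h0 : 0 ∉ D) {ι : Type*} [Finite ι]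
    (h : 2 ^ (Nat.card ι - 1) ≤ D.ncard) :
    ∃ d : ι → X, LinearIndependent (ZMod 2) d ∧ ∀ i, d i ∈ D := by
  have hspan :
      2 ^ (Nat.card ι - 1) < 2 ^ Module.finrank (ZMod 2) (Submodule.span (ZMod 2) D) := calc
    2 ^ (Nat.card ι - 1) < D.ncard + 1 := Nat.lt_succ_of_le h
    _ = (insert 0 D).ncard := (Set.ncard_insert_of_notMem h0).symm
    _ ≤ Nat.card (Submodule.span (ZMod 2) D) :=
      Set.ncard_le_ncard (Set.insert_subset (Submodule.zero_mem _) Submodule.subset_span)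
    _ = 2 ^ Module.finrank (ZMod 2) (Submodule.span (ZMod 2) D) := by
      rw [Module.natCard_eq_pow_finrank (K := ZMod 2), Nat.card_zmod]
  obtain ⟨f, hfD, -, hf⟩ := Submodule.exists_fun_fin_finrank_span_eq (ZMod 2) D
  have hcard := (Nat.pow_lt_pow_iff_right one_lt_two).1 hspan
  let i : ι → Fin (Module.finrank (ZMod 2) (Submodule.span (ZMod 2) D)) :=
    Fin.castLE (by omega) ∘ Finite.equivFin ι
  exact ⟨f ∘ i, hf.comp i ((Fin.castLE_injective _).comp (Finite.equivFin ι).injective),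
    fun _ => hfD _⟩

lemma HasCriticalMap.hasKernelRestriction [Finite E] [Finite X] {D : Set X}
    (hJ : LinearIndepOn (ZMod 2) id J) (h : HasCriticalMap A (N \ J)) (h0 : 0 ∉ D)
    (hD : 2 ^ (J.ncard - 1) ≤ D.ncard) : HasKernelRestriction A N D := by
  obtain ⟨b, hb⟩ := h
  obtain ⟨d, hd, hdD⟩ := exists_linearIndependent_mem h0 (ι := J) hD
  obtain ⟨a, ha⟩ := exists_linearMap_apply_eq_of_linearIndependent hJ d
  obtain ⟨g, hg⟩ := exists_linearMap_apply_eq_of_linearIndependent hd ((↑) : J → E)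
  have hker : {x ∈ N | b x = 0} ⊆ J := fun x hx => by_contra fun hxJ => hb x ⟨hx.1, hxJ⟩ hx.2
  have hga : Set.EqOn (g.comp a) (LinearMap.id (R := ZMod 2)) J := fun x hx =>
    (congrArg g (ha ⟨x, hx⟩)).trans (hg ⟨x, hx⟩)
  refine ⟨b, a, Set.LeftInvOn.injOn (f₁' := g) fun x hx =>
    LinearMap.eqOn_span hga (Submodule.span_mono hker hx), fun x hx => ?_⟩
  rw [← id_eq x, ha ⟨x, hker hx⟩]
  exact hdD _

end Restrictions

section Extremal

variable {A E X : Type*} [AddCommGroup A] [Module (ZMod 2) A] [AddCommGroup E] [Module (ZMod 2) E]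
  [AddCommGroup X] [Module (ZMod 2) X] {N J : Set E} {M : Set X}

lemma exists_linearMap_eqOn_forall_notMem [Finite E] [Finite X] (y : E →ₗ[ZMod 2] X)
    (T : Submodule (ZMod 2) E) (P : Submodule (ZMod 2) X) {S : Set X}
    (hS : Nat.card E * S.ncard < Nat.card P) :
    ∃ ψ : E →ₗ[ZMod 2] X, Set.EqOn ψ y T ∧ (∀ x, ψ x - y x ∈ P) ∧ ∀ x ∉ T, ψ x ∉ S := by
  have := Fintype.ofFinite E
  have := Fintype.ofFinite X
  rw [Nat.card_eq_fintype_card, Nat.card_eq_fintype_card] at hS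
  have hP : (0 : ℝ) < Fintype.card P := by exact_mod_cast Fintype.card_pos
  let B (x : {x // x ∉ T}) : Set P := {w | y x + w ∈ S}
  have hB (x : {x // x ∉ T}) : density (B x) ≤ S.ncard / Fintype.card P := by
    rw [le_div_iff₀' hP, ← card_mul_density]
    exact density_preimage_le_of_injective (f := fun w : P => y x + w)
      ((add_right_injective _).comp Subtype.val_injective) S
  have hsum : ∑ x, density (B x) < 1 := calc
    ∑ x, density (B x) ≤ Fintype.card {x // x ∉ T} * (S.ncard / Fintype.card P) := by
      simpa using Finset.sum_le_card_nsmul Finset.univ _ _ fun x _ => hB x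
    _ ≤ Fintype.card E * (S.ncard / Fintype.card P) := by
      gcongr
      exact Fintype.card_subtype_le _
    _ < 1 := by
      rw [← mul_div_assoc, div_lt_one hP]
      exact_mod_cast hS
  obtain ⟨r, hr⟩ := exists_linearMap_forall_notMem (a := fun x : {x // x ∉ T} => T.mkQ x)
    (fun x => (Submodule.Quotient.mk_eq_zero T).not.2 x.2) hsum
  refine ⟨y + P.subtype ∘ₗ r ∘ₗ T.mkQ, fun x hx => ?_, fun x => ?_, fun x hx => hr ⟨x, hx⟩⟩
  · have : T.mkQ x = 0 := (Submodule.Quotient.mk_eq_zero T).2 hx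
    simp [this]
  · simp

lemma HasKernelRestriction.hasRestriction [Finite E] [Finite X] {p : X →ₗ[ZMod 2] A}
    (hp : Surjective p) (hcard : Nat.card E * ({v | p v ≠ 0 ∧ v ∉ M}.ncard + 1) < Nat.card p.ker)
    (h : HasKernelRestriction A N {v ∈ M | p v = 0}) : HasRestriction N M := by
  obtain ⟨b, a, hinj, hmaps⟩ := h
  obtain ⟨σ, hσ⟩ := LinearMap.exists_rightInverse_of_surjective p (LinearMap.range_eq_top.2 hp)
  replace hσ (z : A) : p (σ z) = z := LinearMap.congr_fun hσ z
  set T := Submodule.span (ZMod 2) {x ∈ N | b x = 0}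
  have hTb : T ≤ b.ker := Submodule.span_le.2 fun x hx => hx.2
  have hTa : T ≤ (p ∘ₗ a).ker := Submodule.span_le.2 fun x hx => (hmaps hx).2
  let y : E →ₗ[ZMod 2] X := σ ∘ₗ b + (a - σ ∘ₗ p ∘ₗ a)
  have hyT {x : E} (hx : x ∈ T) : y x = a x := by
    have hbx : b x = 0 := hTb hx
    have hax : p (a x) = 0 := hTa hx
    simp [y, hbx, hax]
  have hpy (x : E) : p (y x) = b x := by simp [y, hσ]
  obtain ⟨ψ, hψT, hψp, hψS⟩ := exists_linearMap_eqOn_forall_notMem y T p.ker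
    (S := insert 0 {v | p v ≠ 0 ∧ v ∉ M})
    (hcard.trans_le' (Nat.mul_le_mul_left _ (Set.ncard_insert_le _ _)))
  have hpψ (x : E) : p (ψ x) = b x := by
    rw [← hpy, ← sub_eq_zero, ← map_sub]
    exact hψp x
  have hψa {x : E} (hx : x ∈ T) : ψ x = a x := (hψT hx).trans (hyT hx)
  refine ⟨ψ, (injective_iff_map_eq_zero _).2 fun x hx => ?_, Set.image_subset_iff.2 fun x hx => ?_⟩
  · by_cases hxT : x ∈ T
    · exact hinj hxT T.zero_mem (by rw [← hψa hxT, hx, map_zero])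
    · exact absurd (Or.inl hx) (hψS x hxT)
  · by_cases hbx : b x = 0
    · rw [Set.mem_preimage, hψa (Submodule.subset_span ⟨hx, hbx⟩)]
      exact (hmaps ⟨hx, hbx⟩).1
    · by_contra hM
      exact hψS x (fun hxT => hbx (hTb hxT)) (Or.inr ⟨by rwa [hpψ], hM⟩)

lemma natCard_ker_mul_natCard {p : X →ₗ[ZMod 2] A} (hp : Surjective p) :
    Nat.card p.ker * Nat.card A = Nat.card X := by
  rw [Submodule.card_eq_card_quotient_mul_card p.ker,
    Nat.card_congr (p.quotKerEquivOfSurjective hp).toEquiv]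

theorem exists_linearMap_not_hasKernelRestriction [Finite E] (t : ℕ)
    (hN : HasCriticalMap (Fin (t + 1) → ZMod 2) N) :
    ∃ n₀ : ℕ, ∀ {X : Type u} [AddCommGroup X] [Module (ZMod 2) X] [Fintype X] {M : Set X},
      n₀ ≤ Fintype.card X → 2 ^ t * density Mᶜ ≤ 1 → 0 ∉ M → ¬ HasRestriction N M →
      ∃ p : X →ₗ[ZMod 2] (Fin t → ZMod 2), Surjective p ∧
        ¬ HasKernelRestriction (Fin t → ZMod 2) N {v ∈ M | p v = 0} := by
  set e := Nat.card E
  have he : 0 < e := Nat.card_pos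
  obtain ⟨N₁, hN₁⟩ := exists_linearMap_density_le_of_not_containsBoseBurton t e
    (by positivity : (0 : ℝ) < 1 / (2 * e * 2 ^ t))
  obtain ⟨n₁, hn₁⟩ := exists_nat_ge N₁
  refine ⟨max n₁ (2 * e * 2 ^ t + 1), fun {X} _ _ _ M hX hM h0 hfree => ?_⟩
  rw [max_le_iff] at hX
  have hBB : ¬ ContainsBoseBurton (Fin (t + 1) → ZMod 2) (Fin e → ZMod 2) M := fun h => by
    have := Fintype.ofFinite E
    exact hfree <| hN.hasRestriction (h.of_card_le le_rfl (by
      rw [card_fin_zmod_two, ← Nat.card_eq_fintype_card]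
      exact Nat.lt_two_pow_self.le)) h0
  obtain ⟨p, hp, hpM⟩ := hN₁ (hn₁.trans (by exact_mod_cast hX.1)) hM hBB
  refine ⟨p, hp, fun h => hfree (h.hasRestriction hp ?_)⟩
  have hker := natCard_ker_mul_natCard hp
  rw [Nat.card_eq_fintype_card (α := Fin t → ZMod 2), Nat.card_eq_fintype_card (α := X),
    card_fin_zmod_two] at hker
  have hmiss : 2 * e * 2 ^ t * {v | p v ≠ 0 ∧ v ∉ M}.ncard ≤ Fintype.card X := by
    rw [le_div_iff₀' (by positivity)] at hpM
    have := mul_le_mul_of_nonneg_left hpM (Nat.cast_nonneg (Fintype.card X))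
    rw [mul_left_comm, card_mul_density, mul_one] at this
    exact_mod_cast this
  refine lt_of_mul_lt_mul_right (a := 2 * 2 ^ t) ?_ (by positivity)
  linarith [hX.2]

lemma ncard_add_natCard_ker_le [Finite X] (p : X →ₗ[ZMod 2] A) (M : Set X) :
    M.ncard + Nat.card p.ker ≤ Nat.card X + {v ∈ M | p v = 0}.ncard := by
  have hker : (p.ker : Set X).ncard = Nat.card p.ker := Nat.card_coe_set_eq _
  have hdiff : (M \ p.ker).ncard ≤ (p.ker : Set X)ᶜ.ncard := Set.ncard_le_ncard fun _ hv => hv.2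
  have hinter : (M ∩ p.ker).ncard = {v ∈ M | p v = 0}.ncard := rfl
  have := Set.ncard_add_ncard_compl (p.ker : Set X)
  have := Set.ncard_inter_add_ncard_sdiff_eq_ncard M (p.ker : Set X)
  omega

lemma ncard_fst_ne_zero_or_snd_mem_add {A Y : Type*} [Zero A] [Finite A] [Finite Y] (D : Set Y) :
    {v : A × Y | v.1 ≠ 0 ∨ v.2 ∈ D}.ncard + Nat.card Y = Nat.card A * Nat.card Y + D.ncard := by
  have hcompl : {v : A × Y | v.1 ≠ 0 ∨ v.2 ∈ D}ᶜ = {0} ×ˢ Dᶜ := by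
    ext v
    simp
  have hcard := Set.ncard_add_ncard_compl {v : A × Y | v.1 ≠ 0 ∨ v.2 ∈ D}
  rw [hcompl, Set.ncard_prod, Set.ncard_singleton, one_mul, Nat.card_prod] at hcard
  rw [← hcard, add_assoc, add_comm Dᶜ.ncard, Set.ncard_add_ncard_compl]

lemma exNum_le {n b : ℕ}
    (h : ∀ M : Set (Fin n → ZMod 2), 0 ∉ M → ¬ HasRestriction N M → M.ncard ≤ b) :
    exNum N n ≤ b :=
  csSup_le' fun _ ⟨M, h0, hM, hm⟩ => hm ▸ h M h0 hM

lemma ncard_le_exNum [Finite X] {n : ℕ} (hX : Nat.card X = 2 ^ n) (h0 : 0 ∉ M)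
    (hM : ¬ HasRestriction N M) : M.ncard ≤ exNum N n := by
  have hfin : Module.finrank (ZMod 2) X = Module.finrank (ZMod 2) (Fin n → ZMod 2) := by
    rw [Module.natCard_eq_pow_finrank (K := ZMod 2), Nat.card_zmod] at hX
    rw [Module.finrank_fin_fun, Nat.pow_right_injective le_rfl hX]
  let e := LinearEquiv.ofFinrankEq X (Fin n → ZMod 2) hfin
  rw [← Set.ncard_image_of_injective M e.injective]
  refine le_csSup ⟨Nat.card (Fin n → ZMod 2), ?_⟩ ⟨e '' M, ?_, ?_, rfl⟩
  · rintro _ ⟨M', -, -, rfl⟩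
    exact Set.ncard_le_card M'
  · rintro ⟨x, hx, hx0⟩
    exact h0 (e.map_eq_zero_iff.1 hx0 ▸ hx)
  · rintro ⟨ψ, hψ, hsub⟩
    refine hM ⟨e.symm ∘ₗ ψ, e.symm.injective.comp hψ, Set.image_subset_iff.2 fun x hx => ?_⟩
    obtain ⟨y, hy, hyx⟩ := hsub ⟨x, hx, rfl⟩
    rwa [Set.mem_preimage, LinearMap.comp_apply, ← hyx, LinearEquiv.coe_coe, e.symm_apply_apply]

theorem add_ncard_le_exNum {t k n : ℕ} {D : Set (Fin k → ZMod 2)} (h0 : 0 ∉ D)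
    (hD : ¬ HasKernelRestriction (Fin t → ZMod 2) N D) (hn : t + k ≤ n) :
    2 ^ n - 2 ^ (n - t) + D.ncard ≤ exNum N n := by
  obtain ⟨f, hf⟩ := exists_injective_linearMap_of_card_le
    (A := Fin k → ZMod 2) (K := Fin (n - t) → ZMod 2) (by
      rw [card_fin_zmod_two, card_fin_zmod_two]
      exact Nat.pow_le_pow_right two_pos (by omega))
  have hcard := ncard_fst_ne_zero_or_snd_mem_add (A := Fin t → ZMod 2) (f '' D)
  rw [Nat.card_eq_fintype_card, card_fin_zmod_two, Nat.card_eq_fintype_card, card_fin_zmod_two,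
    ← pow_add, Nat.add_sub_cancel' (by omega), Set.ncard_image_of_injective D hf] at hcard
  have hle := ncard_le_exNum (N := N) (n := n)
    (M := {v : (Fin t → ZMod 2) × (Fin (n - t) → ZMod 2) | v.1 ≠ 0 ∨ v.2 ∈ f '' D})
    (by
      rw [Nat.card_prod, Nat.card_eq_fintype_card, card_fin_zmod_two, Nat.card_eq_fintype_card,
        card_fin_zmod_two, ← pow_add, Nat.add_sub_cancel' (by omega)])
    (by
      rintro (h | ⟨x, hx, hx0⟩)
      · exact h rfl
      · exact h0 ((map_eq_zero_iff f hf).1 hx0 ▸ hx))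
    (fun h => hD (h.hasKernelRestriction.of_image hf))
  have := Nat.pow_le_pow_right two_pos (Nat.sub_le n t)
  omega

theorem exNum_le_add [Finite E] {t ℓ : ℕ} (hN : HasCriticalMap (Fin (t + 1) → ZMod 2) N)
    (hℓ : ∀ {k : ℕ} {D : Set (Fin k → ZMod 2)}, 0 ∉ D →
      ¬ HasKernelRestriction (Fin t → ZMod 2) N D → D.ncard ≤ ℓ) :
    ∃ n₀, ∀ n ≥ n₀, exNum N n ≤ 2 ^ n - 2 ^ (n - t) + ℓ := by
  obtain ⟨n₁, hn₁⟩ := exists_linearMap_not_hasKernelRestriction.{0} t hN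
  refine ⟨max n₁ t, fun n hn => exNum_le fun M h0 hM => ?_⟩
  rw [ge_iff_le, max_le_iff] at hn
  by_contra! hlt
  have hpow : 2 ^ t * 2 ^ (n - t) = 2 ^ n := by rw [← pow_add, Nat.add_sub_cancel' hn.2]
  have hMc : Mᶜ.ncard ≤ 2 ^ (n - t) := by
    have := Set.ncard_add_ncard_compl M
    rw [Nat.card_eq_fintype_card, card_fin_zmod_two] at this
    omega
  have hdens : 2 ^ t * density Mᶜ ≤ 1 := by
    refine le_of_mul_le_mul_left (a := (2 : ℝ) ^ n) ?_ (by positivity)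
    have hc := card_mul_density Mᶜ
    rw [card_fin_zmod_two, Nat.cast_pow, Nat.cast_ofNat] at hc
    rw [mul_left_comm, hc, mul_one]
    exact_mod_cast hpow ▸ Nat.mul_le_mul_left (2 ^ t) hMc
  obtain ⟨p, hp, hpM⟩ := hn₁ (by
    rw [card_fin_zmod_two]; exact hn.1.trans Nat.lt_two_pow_self.le) hdens h0 hM
  have hker := natCard_ker_mul_natCard hp
  have hle := ncard_add_natCard_ker_le p M
  rw [Nat.card_eq_fintype_card (α := Fin n → ZMod 2), card_fin_zmod_two] at hker hle
  rw [Nat.card_eq_fintype_card (α := Fin t → ZMod 2), card_fin_zmod_two, mul_comm, ← hpow] at hker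
  rw [Nat.eq_of_mul_eq_mul_left (by positivity) hker] at hle
  have := hℓ (fun h => h0 h.1) hpM
  omega

theorem graphic_exact_general [Finite E] {t : ℕ} (hN : ¬ HasCriticalMap (Fin t → ZMod 2) N)
    (hJ : LinearIndepOn (ZMod 2) id J) (hNJ : HasCriticalMap (Fin t → ZMod 2) (N \ J)) :
    ∃ ℓ : ℕ, ℓ < 2 ^ (J.ncard - 1) ∧ ∃ n₀ : ℕ, ∀ n ≥ n₀,
      exNum N n = 2 ^ n - 2 ^ (n - t) + ℓ := by
  set L : Set ℕ := {ℓ | ∃ (k : ℕ) (D : Set (Fin k → ZMod 2)), 0 ∉ D ∧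
    ¬ HasKernelRestriction (Fin t → ZMod 2) N D ∧ D.ncard = ℓ}
  have hlt : ∀ ℓ ∈ L, ℓ < 2 ^ (J.ncard - 1) := by
    rintro _ ⟨k, D, h0, hD, rfl⟩
    exact lt_of_not_ge fun h => hD (hNJ.hasKernelRestriction hJ h0 h)
  have hbdd : BddAbove L := ⟨_, fun ℓ hℓ => (hlt ℓ hℓ).le⟩
  have hmem : sSup L ∈ L := Nat.sSup_mem
    ⟨0, 0, ∅, Set.notMem_empty 0, fun h => hN h.hasCriticalMap, Set.ncard_empty _⟩ hbdd
  refine ⟨sSup L, hlt _ hmem, ?_⟩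
  have hN' : HasCriticalMap (Fin (t + 1) → ZMod 2) N :=
    (hNJ.of_diff hJ).of_card_le (by simp [pow_succ'])
  obtain ⟨n₁, hn₁⟩ := exNum_le_add hN' fun {k D} h0 hD => le_csSup hbdd ⟨k, D, h0, hD, rfl⟩
  obtain ⟨k, D, h0, hD, hcard⟩ := hmem
  refine ⟨max n₁ (t + k), fun n hn => ?_⟩
  rw [ge_iff_le, max_le_iff] at hn
  exact (hn₁ n hn.1).antisymm (hcard ▸ add_ncard_le_exNum h0 hD hn.2)

end Extremal

section Graph

variable {V : Type*} {G : SimpleGraph V}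

/-- The incidence vector of an edge: the indicator of its set of endpoints. -/
noncomputable def edgeVector (e : Sym2 V) : V → ZMod 2 := Set.indicator {w | w ∈ e} 1

lemma edgeVector_injective : Injective (edgeVector : Sym2 V → V → ZMod 2) := fun _ _ h =>
  Sym2.ext fun w => Set.ext_iff.1 (Set.indicator_one_inj (ZMod 2) h) w

lemma edgeVector_mk [DecidableEq V] {u v : V} (h : u ≠ v) :
    edgeVector s(u, v) = Pi.single u 1 + Pi.single v 1 := by
  ext w
  by_cases hu : w = u <;> by_cases hv : w = v <;> simp_all [edgeVector]

lemma exists_linearMap_edgeVector_of_isBridge [Finite V] {e : Sym2 V} (he : G.IsBridge e) :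
    ∃ f : (V → ZMod 2) →ₗ[ZMod 2] ZMod 2, f (edgeVector e) = 1 ∧
      ∀ e' ∈ G.edgeSet, e ≠ e' → f (edgeVector e') = 0 := by
  have := Fintype.ofFinite V
  induction e with | _ u v
  rw [SimpleGraph.isBridge_iff] at he
  set H := G.deleteEdges {s(u, v)}
  have huv : u ≠ v := fun h => he (h ▸ .refl _)
  let c : V → ZMod 2 := fun w => if H.Reachable u w then 1 else 0
  have hc {x y : V} (hxy : x ≠ y) :
      Fintype.linearCombination (ZMod 2) c (edgeVector s(x, y)) = c x + c y := by
    rw [edgeVector_mk hxy, map_add, Fintype.linearCombination_apply_single,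
      Fintype.linearCombination_apply_single, one_smul, one_smul]
  refine ⟨Fintype.linearCombination (ZMod 2) c, ?_, fun e' he' hne => ?_⟩
  · rw [hc huv]
    simp [c, he]
  · induction e' with | _ x y
    have hxy : H.Adj x y := G.deleteEdges_adj.2 ⟨he', hne.symm⟩
    have hiff : H.Reachable u x ↔ H.Reachable u y :=
      ⟨fun h => h.trans hxy.reachable, fun h => h.trans hxy.symm.reachable⟩
    rw [hc hxy.ne]
    simp only [c, hiff]
    exact ZModModule.add_self _

variable [DecidableEq V]

lemma cycleMatroid_eq_image (G : SimpleGraph V) : cycleMatroid G = edgeVector '' G.edgeSet := by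
  ext x
  constructor
  · rintro ⟨u, v, h, rfl⟩
    exact ⟨s(u, v), h, edgeVector_mk h.ne⟩
  · rintro ⟨e, he, rfl⟩
    induction e with
    | _ u v => exact ⟨u, v, he, edgeVector_mk (G.ne_of_adj he)⟩

lemma ncard_cycleMatroid_fromEdgeSet {F : Finset (Sym2 V)}
    (hF : (F : Set (Sym2 V)) ⊆ Sym2.diagSetᶜ) :
    (cycleMatroid (SimpleGraph.fromEdgeSet (F : Set (Sym2 V)))).ncard = F.card := by
  rw [cycleMatroid_eq_image, Set.ncard_image_of_injective _ edgeVector_injective,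
    SimpleGraph.edgeSet_fromEdgeSet, sdiff_eq_left.2 (Set.subset_compl_iff_disjoint_right.1 hF),
    Set.ncard_coe_finset]

lemma cycleMatroid_deleteEdges (G : SimpleGraph V) (s : Set (Sym2 V)) :
    cycleMatroid (G.deleteEdges s) = cycleMatroid G \ cycleMatroid (SimpleGraph.fromEdgeSet s) := by
  simp_rw [cycleMatroid_eq_image, ← Set.image_sdiff edgeVector_injective]
  congr 1
  ext e
  simp

lemma hasCriticalMap_cycleMatroid_iff [Finite V] {A : Type*} [AddCommGroup A] [Module (ZMod 2) A]
    [Fintype A] : HasCriticalMap A (cycleMatroid G) ↔ G.Colorable (Fintype.card A) := by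
  have := Fintype.ofFinite V
  have ne_iff (a b : A) : a + b ≠ 0 ↔ a ≠ b := by
    rw [← ZModModule.sub_eq_add, sub_ne_zero]
  constructor
  · rintro ⟨φ, hφ⟩
    refine (SimpleGraph.Coloring.mk (fun v => φ (Pi.single v 1)) fun {u v} h => ?_).colorable
    rw [← ne_iff, ← map_add]
    exact hφ _ ⟨u, v, h, rfl⟩
  · intro hG
    let c := hG.toColoring (α := A) le_rfl
    refine ⟨Fintype.linearCombination (ZMod 2) c, ?_⟩
    rintro _ ⟨u, v, h, rfl⟩
    rw [map_add, Fintype.linearCombination_apply_single, Fintype.linearCombination_apply_single,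
      one_smul, one_smul, ne_iff]
    exact c.valid h

lemma hasCriticalMap_cycleMatroid_iff_chromaticNumber_le [Finite V] {t : ℕ} :
    HasCriticalMap (Fin t → ZMod 2) (cycleMatroid G) ↔ G.chromaticNumber ≤ (2 ^ t : ℕ) := by
  rw [hasCriticalMap_cycleMatroid_iff, card_fin_zmod_two,
    SimpleGraph.chromaticNumber_le_iff_colorable]

lemma linearIndepOn_cycleMatroid [Finite V] (hG : G.IsAcyclic) :
    LinearIndepOn (ZMod 2) id (cycleMatroid G) := by
  choose f hf hf' using fun e : G.edgeSet => exists_linearMap_edgeVector_of_isBridge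
    (SimpleGraph.isAcyclic_iff_forall_isBridge.1 hG e.2)
  rw [cycleMatroid_eq_image]
  exact LinearIndepOn.id_image <| LinearIndependent.of_pairwise_dual_eq_zero_one _ f
    (fun e e' h => hf' e e' e'.2 (Subtype.coe_injective.ne h)) hf

end Graph

/-- Exact Turán numbers for cycle matroids of graphs admitting a forest whose
deletion drops the chromatic number to at most `2^t`. -/
theorem graphic_exact {V : Type*} [Fintype V] [DecidableEq V] (G : SimpleGraph V)
    (hχ2 : 2 ≤ G.chromaticNumber) (t : ℕ)
    (ht1 : ((2 ^ t : ℕ) : ℕ∞) < G.chromaticNumber)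
    (ht2 : G.chromaticNumber ≤ ((2 ^ (t + 1) : ℕ) : ℕ∞))
    (F : Finset (Sym2 V)) (hF : (F : Set (Sym2 V)) ⊆ G.edgeSet)
    (hforest : (SimpleGraph.fromEdgeSet (F : Set (Sym2 V))).IsAcyclic)
    (hdel : (G.deleteEdges (F : Set (Sym2 V))).chromaticNumber ≤ ((2 ^ t : ℕ) : ℕ∞)) :
    ∃ ℓ : ℕ, ℓ < 2 ^ (F.card - 1) ∧ ∃ n₀ : ℕ, ∀ n ≥ n₀,
      exNum (cycleMatroid G) n = 2 ^ n - 2 ^ (n - t) + ℓ := by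
  rw [← ncard_cycleMatroid_fromEdgeSet (hF.trans G.edgeSet_subset_compl_diagSet)]
  exact graphic_exact_general (ht1.not_ge ∘ hasCriticalMap_cycleMatroid_iff_chromaticNumber_le.1)
    (linearIndepOn_cycleMatroid hforest)
    (cycleMatroid_deleteEdges G F ▸ hasCriticalMap_cycleMatroid_iff_chromaticNumber_le.2 hdel)
end

section
/- Let O₆ be the octahedral graph, i.e. the complete tripartite graph K_{2,2,2} on 6 vertices. Then for all sufficiently large n, ex({M(O₆)}, n) = 2^{n−1} + 4. -/
open scoped Classical

/-- The octahedral graph `K_{2,2,2}`: vertices `0..5` paired as `{0,1},{2,3},{4,5}`,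
two vertices adjacent iff they lie in different pairs. -/
def octahedron : SimpleGraph (Fin 6) :=
  SimpleGraph.fromRel (fun u v => (u : ℕ) / 2 ≠ (v : ℕ) / 2)

/-!
Compare `M` with the complement of a hyperplane. If no Walsh coefficient of `M` is close to
`-2 ^ (n - 1)`, then a positive proportion of the triples sums to zero inside `M`, and
Cauchy–Schwarz turns these triangles into so many octahedra that one of them has linearly
independent vertices.

Otherwise `M` almost contains the complement of a hyperplane `ker f`. An octahedron then appears as
soon as, for some 2-colouring of its vertices, the monochromatic edges embed in `M ∩ ker f`: shift
one colour class by a generic vector off the hyperplane. The colourings whose monochromatic edges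
form two paths, respectively a four-cycle, are satisfied by four independent elements, respectively
by a four-element circuit, and any five nonzero vectors over `𝔽₂` contain one of the two. Hence `M`
has at most four elements in `ker f`.

Four are possible: every 2-colouring has four monochromatic edges leaving some antipodal pair, and
no two of these vectors sum to a third, so they do not fit onto `{a, b, a + b, c}`.
-/

open Finset Module

theorem card_sq_le_card_mul_card_fun_two {α β : Type*} [Fintype α] [Fintype β]
    (R : α → β → Prop) [∀ a, DecidablePred (R a)] :
    #{p : α × β | R p.1 p.2} ^ 2 ≤
      Fintype.card α * #{p : α × (Fin 2 → β) | ∀ j, R p.1 (p.2 j)} := by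
  have hpairs (a : α) : #{b : β | R a b} ^ 2 = #{y : Fin 2 → β | ∀ j, R a (y j)} := by
    rw [← Fintype.card_piFinset_const]
    congr 1
    ext y
    simp
  calc #{p : α × β | R p.1 p.2} ^ 2
      = (∑ a, #{b : β | R a b}) ^ 2 := by simp only [card_filter, Fintype.sum_prod_type]
    _ ≤ Fintype.card α * ∑ a, #{b : β | R a b} ^ 2 := sq_sum_le_card_mul_sum_sq
    _ = Fintype.card α * #{p : α × (Fin 2 → β) | ∀ j, R p.1 (p.2 j)} := by
      simp only [hpairs]
      simp only [card_filter, Fintype.sum_prod_type]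

-- Cauchy–Schwarz doubles one coordinate at a time.
theorem card_pow_eight_le_mul_card_fun_two {α β γ : Type*} [Fintype α] [Fintype β] [Fintype γ]
    (R : α → β → γ → Prop) [∀ a b, DecidablePred (R a b)] :
    #{t : α × β × γ | R t.1 t.2.1 t.2.2} ^ 8 ≤
      (Fintype.card α * Fintype.card β * Fintype.card γ) ^ 6 *
        #{t : (Fin 2 → α) × (Fin 2 → β) × (Fin 2 → γ) |
          ∀ i j k, R (t.1 i) (t.2.1 j) (t.2.2 k)} := by
  have hγ := card_sq_le_card_mul_card_fun_two fun (p : α × β) c ↦ R p.1 p.2 c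
  have hβ := card_sq_le_card_mul_card_fun_two fun (p : α × (Fin 2 → γ)) b ↦ ∀ k, R p.1 b (p.2 k)
  have hα := card_sq_le_card_mul_card_fun_two
    fun (p : (Fin 2 → β) × (Fin 2 → γ)) a ↦ ∀ j k, R a (p.1 j) (p.2 k)
  rw [card_equiv (Equiv.prodAssoc α β γ) (t := {t | R t.1 t.2.1 t.2.2}) (by simp),
    card_equiv (t := {p : (α × (Fin 2 → γ)) × β | ∀ k, R p.1.1 p.2 (p.1.2 k)})
      ⟨fun p ↦ ((p.1.1, p.2), p.1.2), fun p ↦ ((p.1.1, p.2), p.1.2), fun _ ↦ rfl, fun _ ↦ rfl⟩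
      (by simp)] at hγ
  rw [card_equiv (t := {p : ((Fin 2 → β) × (Fin 2 → γ)) × α | ∀ j k, R p.2 (p.1.1 j) (p.1.2 k)})
      ⟨fun p ↦ ((p.2, p.1.2), p.1.1), fun p ↦ ((p.2, p.1.2), p.1.1), fun _ ↦ rfl, fun _ ↦ rfl⟩
      (by simp)] at hβ
  rw [card_equiv (Equiv.prodComm _ _) (t := {t : (Fin 2 → α) × (Fin 2 → β) × (Fin 2 → γ) |
    ∀ i j k, R (t.1 i) (t.2.1 j) (t.2.2 k)}) (by simp)] at hα
  simp only [Fintype.card_prod, Fintype.card_fun, Fintype.card_fin] at hα hβ hγ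
  set a := Fintype.card α
  set b := Fintype.card β
  set c := Fintype.card γ
  set N₀ := #{t : α × β × γ | R t.1 t.2.1 t.2.2}
  set N₁ := #{p : (α × (Fin 2 → γ)) × β | ∀ k, R p.1.1 p.2 (p.1.2 k)}
  set N₂ := #{p : ((Fin 2 → β) × (Fin 2 → γ)) × α | ∀ j k, R p.2 (p.1.1 j) (p.1.2 k)}
  set N₃ := #{t : (Fin 2 → α) × (Fin 2 → β) × (Fin 2 → γ) |
    ∀ i j k, R (t.1 i) (t.2.1 j) (t.2.2 k)}
  calc N₀ ^ 8 = (N₀ ^ 2) ^ 4 := by ring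
    _ ≤ (a * b * N₁) ^ 4 := by gcongr
    _ = (a * b) ^ 4 * (N₁ ^ 2) ^ 2 := by ring
    _ ≤ (a * b) ^ 4 * (a * c ^ 2 * N₂) ^ 2 := by gcongr
    _ = (a ^ 3 * b ^ 2 * c ^ 2) ^ 2 * N₂ ^ 2 := by ring
    _ ≤ (a ^ 3 * b ^ 2 * c ^ 2) ^ 2 * (b ^ 2 * c ^ 2 * N₃) := by gcongr
    _ = (a * b * c) ^ 6 * N₃ := by ring

section LinearIndependent

variable {K V ι : Type*} [Field K] [AddCommGroup V] [Module K V]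

theorem card_sum_smul_eq_zero_mul_card [Fintype V] [Fintype ι] [DecidableEq ι] [DecidableEq V]
    {g : ι → K} (hg : g ≠ 0) :
    #{v : ι → V | ∑ i, g i • v i = 0} * Fintype.card V = Fintype.card V ^ Fintype.card ι := by
  obtain ⟨i, hi⟩ := Function.ne_iff.1 hg
  let L : (ι → V) →ₗ[K] V := ∑ j, g j • LinearMap.proj j
  have hL (v : ι → V) : L v = ∑ j, g j • v j := by simp [L]
  have hsurj : Function.Surjective L := fun x ↦
    ⟨Pi.single i ((g i)⁻¹ • x), by
      simp [hL, Pi.single_apply, smul_ite, smul_smul, mul_inv_cancel₀ hi]⟩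
  have hker : Nat.card (LinearMap.ker L) = #{v : ι → V | ∑ i, g i • v i = 0} := by
    rw [Nat.card_eq_fintype_card, Fintype.card_subtype]
    simp [hL]
  have hquot : Nat.card ((ι → V) ⧸ LinearMap.ker L) = Fintype.card V := by
    rw [Nat.card_congr (L.quotKerEquivOfSurjective hsurj).toEquiv, Nat.card_eq_fintype_card]
  calc #{v : ι → V | ∑ i, g i • v i = 0} * Fintype.card V
      = Nat.card (LinearMap.ker L) * Nat.card ((ι → V) ⧸ LinearMap.ker L) := by rw [hker, hquot]
    _ = Fintype.card V ^ Fintype.card ι := by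
      rw [← Submodule.card_eq_card_quotient_mul_card, Nat.card_eq_fintype_card, Fintype.card_fun]

theorem card_not_linearIndependent_mul_card_le [Fintype K] [Fintype V] [Fintype ι]
    [DecidableEq ι] :
    #{v : ι → V | ¬ LinearIndependent K v} * Fintype.card V ≤
      Fintype.card K ^ Fintype.card ι * Fintype.card V ^ Fintype.card ι := by
  have hsub : ({v : ι → V | ¬ LinearIndependent K v} : Finset (ι → V)) ⊆
      ({g : ι → K | g ≠ 0} : Finset (ι → K)).biUnion fun g ↦ {v | ∑ i, g i • v i = 0} := by
    intro v hv
    simp only [mem_filter_univ, Fintype.not_linearIndependent_iff, mem_biUnion] at hv ⊢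
    obtain ⟨g, hg, i, hi⟩ := hv
    exact ⟨g, Function.ne_iff.2 ⟨i, hi⟩, hg⟩
  calc #{v : ι → V | ¬ LinearIndependent K v} * Fintype.card V
      ≤ (∑ g : ι → K with g ≠ 0, #{v : ι → V | ∑ i, g i • v i = 0}) * Fintype.card V := by
        gcongr
        exact (card_le_card hsub).trans card_biUnion_le
    _ = #{g : ι → K | g ≠ 0} * Fintype.card V ^ Fintype.card ι := by
        rw [sum_mul, ← smul_eq_mul, ← sum_const]
        exact sum_congr rfl fun g hg ↦ card_sum_smul_eq_zero_mul_card (mem_filter_univ g |>.1 hg)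
    _ ≤ Fintype.card K ^ Fintype.card ι * Fintype.card V ^ Fintype.card ι := by
        gcongr
        exact (card_le_univ _).trans_eq Fintype.card_fun

theorem exists_linearIndependent_extend_fin {k m : ℕ} {v : Fin k → V}
    (hv : LinearIndependent K v) (hkm : k ≤ m) (hm : m ≤ finrank K V) :
    ∃ u : Fin m → V, LinearIndependent K u ∧ ∀ i, u (Fin.castLE hkm i) = v i := by
  induction m, hkm using Nat.le_induction with
  | base => exact ⟨v, hv, fun i ↦ rfl⟩
  | succ m hkm ih =>
    obtain ⟨u, hu, huv⟩ := ih (by omega)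
    obtain ⟨x, hx⟩ := exists_linearIndependent_snoc_of_lt_finrank hu hm
    refine ⟨Fin.snoc u x, hx, fun i ↦ ?_⟩
    rw [← huv, ← Fin.castSucc_castLE, Fin.snoc_castSucc]

theorem finrank_le_finrank_ker_add_one [FiniteDimensional K V] (f : Dual K V) :
    finrank K V ≤ finrank K (LinearMap.ker f) + 1 := by
  have hrange := (LinearMap.range f).finrank_le
  rw [finrank_self] at hrange
  have hsum := f.finrank_range_add_finrank_ker
  omega

end LinearIndependent

section CycleMatroid

variable {V ι : Type*} [AddCommGroup V] [Module (ZMod 2) V] [DecidableEq ι]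

theorem hasRestriction_cycleMatroid_iff [Finite ι] {G : SimpleGraph ι} {M : Set V} :
    HasRestriction (cycleMatroid G) M ↔
      ∃ v : ι → V, LinearIndependent (ZMod 2) v ∧ ∀ i j, G.Adj i j → v i + v j ∈ M := by
  have := Fintype.ofFinite ι
  constructor
  · rintro ⟨ψ, hψ, hM⟩
    refine ⟨fun i ↦ ψ (Pi.single i 1), ?_, fun i j hij ↦ hM ⟨_, ⟨i, j, hij, rfl⟩, map_add ..⟩⟩
    simpa [Function.comp_def] using (Pi.basisFun (ZMod 2) ι).linearIndependent.map' ψ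
      (LinearMap.ker_eq_bot.2 hψ)
  · rintro ⟨v, hv, hM⟩
    refine ⟨Fintype.linearCombination (ZMod 2) v, hv.fintypeLinearCombination_injective, ?_⟩
    rintro _ ⟨_, ⟨i, j, hij, rfl⟩, rfl⟩
    simpa using hM i j hij

theorem hasRestriction_cycleMatroid_of_card_lt [Fintype V] [Fintype ι] {G : SimpleGraph ι}
    {M : Set V} {S : Finset (ι → V)} (hS : ∀ v ∈ S, ∀ i j, G.Adj i j → v i + v j ∈ M)
    (hcard : 2 ^ Fintype.card ι * Fintype.card V ^ Fintype.card ι < #S * Fintype.card V) :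
    HasRestriction (cycleMatroid G) M := by
  rw [hasRestriction_cycleMatroid_iff]
  by_contra! hM
  have hsub : S ⊆ ({v | ¬ LinearIndependent (ZMod 2) v} : Finset (ι → V)) := fun v hv ↦
    mem_filter_univ v |>.2 fun hli ↦ by
      obtain ⟨i, j, hij, hne⟩ := hM v hli
      exact hne (hS v hv i j hij)
  have hdep := card_not_linearIndependent_mul_card_le (K := ZMod 2) (V := V) (ι := ι)
  rw [ZMod.card] at hdep
  exact hcard.not_ge ((Nat.mul_le_mul_right _ (card_le_card hsub)).trans hdep)

end CycleMatroid

theorem octahedron_adj {i j : Fin 6} : octahedron.Adj i j ↔ (i : ℕ) / 2 ≠ (j : ℕ) / 2 := by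
  simp only [octahedron, SimpleGraph.fromRel_adj]
  grind

theorem add_mem_of_octahedron_adj {V : Type*} [AddCommMagma V] {M : Set V} {x y z : Fin 2 → V}
    (hxy : ∀ i j, x i + y j ∈ M) (hxz : ∀ i k, x i + z k ∈ M) (hyz : ∀ j k, y j + z k ∈ M)
    {i j : Fin 6} (hij : octahedron.Adj i j) :
    ![x 0, x 1, y 0, y 1, z 0, z 1] i + ![x 0, x 1, y 0, y 1, z 0, z 1] j ∈ M := by
  wlog hle : i ≤ j generalizing i j
  · rw [add_comm]
    exact this hij.symm (le_of_not_ge hle)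
  rw [octahedron_adj] at hij
  fin_cases i <;> fin_cases j <;>
    first
    | exact absurd rfl hij
    | exact absurd hle (by decide)
    | exact hxy _ _
    | exact hxz _ _
    | exact hyz _ _

section Walsh

variable {V : Type*} [AddCommGroup V] [Module (ZMod 2) V]

noncomputable instance [Finite V] : Fintype (Dual (ZMod 2) V) :=
  have : Finite (Dual (ZMod 2) V) := DFunLike.finite _
  Fintype.ofFinite _

/-- The nontrivial real character `a ↦ (-1) ^ a` of `𝔽₂`, used to form Walsh coefficients. -/
noncomputable def signChar : AddChar (ZMod 2) ℝ :=
  AddChar.zmodChar 2 (ζ := -1) (by norm_num)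

theorem signChar_apply (a : ZMod 2) : signChar a = if a = 0 then 1 else -1 := by
  obtain rfl | rfl : a = 0 ∨ a = 1 := by decide +revert
  · simp
  · simp [signChar, AddChar.zmodChar_apply, ZMod.val_one]

/-- The Walsh coefficient at `f` of the indicator function of `M`, without normalization. -/
noncomputable def walshCoeff (M : Finset V) (f : Dual (ZMod 2) V) : ℝ :=
  ∑ x ∈ M, signChar (f x)

theorem walshCoeff_zero (M : Finset V) : walshCoeff M 0 = #M := by
  simp [walshCoeff]

theorem walshCoeff_eq_card_sub_card (M : Finset V) (f : Dual (ZMod 2) V) :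
    walshCoeff M f = #{x ∈ M | f x = 0} - #{x ∈ M | f x ≠ 0} := by
  simp only [walshCoeff, signChar_apply, sum_ite, sum_const, nsmul_eq_mul]
  ring

theorem two_mul_card_apply_ne_zero [Fintype V] {f : Dual (ZMod 2) V} (hf : f ≠ 0) :
    2 * #{x : V | f x ≠ 0} = Fintype.card V := by
  obtain ⟨y, hy⟩ := DFunLike.ne_iff.1 hf
  rw [LinearMap.zero_apply] at hy
  have htranslate : #{x : V | f x = 0} = #{x : V | f x ≠ 0} := by
    refine card_equiv (Equiv.addRight y) fun x ↦ ?_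
    simp only [mem_filter_univ, Equiv.coe_addRight, map_add]
    generalize f x = a at *
    generalize f y = b at *
    decide +revert
  rw [two_mul, ← card_univ, ← card_filter_add_card_filter_not (fun x : V ↦ f x = 0) (s := univ),
    htranslate]

theorem sum_dual_signChar_apply [Fintype V] (x : V) :
    ∑ f : Dual (ZMod 2) V, signChar (f x) = if x = 0 then (Fintype.card V : ℝ) else 0 := by
  let ψ : AddChar (Dual (ZMod 2) V) ℝ :=
    signChar.compAddMonoidHom (Dual.eval (ZMod 2) V x).toAddMonoidHom
  have hψ : ψ = 0 ↔ x = 0 := by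
    rw [← forall_dual_apply_eq_zero_iff (ZMod 2) x, DFunLike.ext_iff]
    refine forall_congr' fun f ↦ ?_
    change signChar (f x) = 1 ↔ _
    rw [signChar_apply]
    split_ifs <;> norm_num [*]
  have hcard : Fintype.card (Dual (ZMod 2) V) = Fintype.card V := by
    rw [card_eq_pow_finrank (K := ZMod 2), Subspace.dual_finrank_eq, ← card_eq_pow_finrank]
  calc ∑ f : Dual (ZMod 2) V, signChar (f x) = ∑ f, ψ f := rfl
    _ = if x = 0 then (Fintype.card V : ℝ) else 0 := by
      simp only [AddChar.sum_eq_ite, hψ, hcard]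

theorem sum_walshCoeff_pow [Fintype V] (M : Finset V) (k : ℕ) :
    ∑ f, walshCoeff M f ^ k =
      Fintype.card V * #{v ∈ Fintype.piFinset fun _ : Fin k ↦ M | ∑ i, v i = 0} := by
  calc ∑ f, walshCoeff M f ^ k
      = ∑ f : Dual (ZMod 2) V, ∑ v ∈ Fintype.piFinset fun _ : Fin k ↦ M,
          signChar (f (∑ i, v i)) := by
        refine sum_congr rfl fun f _ ↦ ?_
        rw [walshCoeff, sum_pow']
        simp only [map_sum]
        refine sum_congr rfl fun v _ ↦ ?_
        exact (map_prod signChar.toMonoidHom (fun i ↦ Multiplicative.ofAdd (f (v i))) _).symm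
    _ = ∑ v ∈ Fintype.piFinset fun _ : Fin k ↦ M,
          if ∑ i, v i = 0 then (Fintype.card V : ℝ) else 0 := by
        rw [sum_comm]
        simp only [sum_dual_signChar_apply]
    _ = Fintype.card V * #{v ∈ Fintype.piFinset fun _ : Fin k ↦ M | ∑ i, v i = 0} := by
        rw [← sum_filter, sum_const, nsmul_eq_mul, mul_comm]

theorem sum_walshCoeff_sq_le [Fintype V] (M : Finset V) :
    ∑ f, walshCoeff M f ^ 2 ≤ Fintype.card V * #M := by
  rw [sum_walshCoeff_pow]
  gcongr
  refine card_le_card_of_injOn (· 0) (fun v hv ↦ ?_) fun v hv w hw hvw ↦ ?_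
  · exact Fintype.mem_piFinset.1 (mem_filter.1 hv).1 0
  · have hv' := (mem_filter.1 hv).2
    have hw' := (mem_filter.1 hw).2
    rw [Fin.sum_univ_two, ← ZModModule.sub_eq_add, sub_eq_zero] at hv' hw'
    ext i
    fin_cases i <;> simp_all

-- Bounding one factor of each cube from below leaves only the second moment.
theorem le_card_triangle_of_le_walshCoeff [Fintype V] {M : Finset V} {ε : ℝ} (hε₀ : 0 ≤ ε)
    (hε : ε ≤ 1 / 2) (hM : (Fintype.card V : ℝ) ≤ 2 * #M)
    (hcoeff : ∀ f ≠ 0, (ε - 1 / 2) * Fintype.card V ≤ walshCoeff M f) :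
    ε / 4 * Fintype.card V ^ 2 ≤
      #{v ∈ Fintype.piFinset fun _ : Fin 3 ↦ M | ∑ i, v i = 0} := by
  set N : ℝ := (Fintype.card V : ℝ)
  set T : ℝ := (#{v ∈ Fintype.piFinset fun _ : Fin 3 ↦ M | ∑ i, v i = 0} : ℝ)
  set m : ℝ := (#M : ℝ)
  have hN : 0 < N := by simp [N, Fintype.card_pos]
  have hsq := sum_walshCoeff_sq_le M
  have hcube := sum_walshCoeff_pow M 3
  rw [← add_sum_erase _ _ (mem_univ 0), walshCoeff_zero] at hsq hcube
  have hterm : (ε - 1 / 2) * N * ∑ f ∈ univ.erase 0, walshCoeff M f ^ 2 ≤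
      ∑ f ∈ univ.erase 0, walshCoeff M f ^ 3 := by
    rw [mul_sum]
    refine sum_le_sum fun f hf ↦ ?_
    rw [pow_succ' _ 2]
    gcongr
    exact hcoeff f (ne_of_mem_erase hf)
  have hNT : m ^ 3 - (1 / 2 - ε) * N * (N * m - m ^ 2) ≤ N * T := by
    have := mul_le_mul_of_nonneg_left (le_sub_iff_add_le'.2 hsq)
      (mul_nonneg (sub_nonneg.2 hε) hN.le)
    linarith
  have hquad : ε / 2 * N ^ 2 ≤ m ^ 2 - (1 / 2 - ε) * N * (N - m) := by
    nlinarith [mul_nonneg (sub_nonneg.2 hε) hN.le]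
  have hm : N / 2 * (ε / 2 * N ^ 2) ≤ m * (m ^ 2 - (1 / 2 - ε) * N * (N - m)) := by
    gcongr
    linarith
  refine le_of_mul_le_mul_left (?_ : N * (ε / 4 * N ^ 2) ≤ N * T) hN
  linarith

end Walsh

section Dense

variable {V : Type*} [AddCommGroup V] [Module (ZMod 2) V] [Fintype V]

theorem card_mul_card_triangle_le_card_pairwise_add_mem (M : Finset V) :
    Fintype.card V * #{v ∈ Fintype.piFinset fun _ : Fin 3 ↦ M | ∑ i, v i = 0} ≤
      #{t : V × V × V | t.1 + t.2.1 ∈ M ∧ t.1 + t.2.2 ∈ M ∧ t.2.1 + t.2.2 ∈ M} := by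
  rw [← card_univ, ← card_product]
  refine card_le_card_of_injOn (fun p ↦ (p.1, p.1 + p.2 0, p.1 + p.2 1)) ?_ ?_
  · rintro ⟨a, v⟩ hv
    rw [mem_coe, mem_product, mem_filter, Fintype.mem_piFinset, Fin.sum_univ_three] at hv
    obtain ⟨-, hM, hsum⟩ := hv
    rw [mem_coe, mem_filter_univ]
    have hv₂ : v 0 + v 1 = v 2 := by rw [← sub_eq_zero, ZModModule.sub_eq_add, hsum]
    rw [← add_assoc, ← add_assoc, add_add_add_comm, ZModModule.add_self, zero_add, zero_add,
      zero_add, hv₂]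
    exact ⟨hM 0, hM 1, hM 2⟩
  · rintro ⟨a, v⟩ hv ⟨b, w⟩ hw hvw
    obtain ⟨rfl, h⟩ := Prod.mk.inj hvw
    have h₀ : v 0 = w 0 := add_left_cancel (Prod.mk.inj h).1
    have h₁ : v 1 = w 1 := add_left_cancel (Prod.mk.inj h).2
    have hv : v 0 + v 1 + v 2 = 0 := by
      simpa [Fin.sum_univ_three] using (mem_filter.1 (mem_product.1 hv).2).2
    have hw : w 0 + w 1 + w 2 = 0 := by
      simpa [Fin.sum_univ_three] using (mem_filter.1 (mem_product.1 hw).2).2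
    have h₂ : v 2 = w 2 := by
      rw [eq_neg_of_add_eq_zero_right hv, eq_neg_of_add_eq_zero_right hw, h₀, h₁]
    refine Prod.ext rfl (funext fun i ↦ ?_)
    fin_cases i <;> assumption

theorem hasRestriction_octahedron_of_card_lt {M : Finset V}
    (hM : 2 ^ 6 * Fintype.card V ^ 23 <
      #{t : V × V × V | t.1 + t.2.1 ∈ M ∧ t.1 + t.2.2 ∈ M ∧ t.2.1 + t.2.2 ∈ M} ^ 8) :
    HasRestriction (cycleMatroid octahedron) (M : Set V) := by
  set N := Fintype.card V with hN
  let H : Finset ((Fin 2 → V) × (Fin 2 → V) × (Fin 2 → V)) := {t | ∀ i j k,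
    t.1 i + t.2.1 j ∈ M ∧ t.1 i + t.2.2 k ∈ M ∧ t.2.1 j + t.2.2 k ∈ M}
  let S : Finset (Fin 6 → V) := {v | ∀ i j, octahedron.Adj i j → v i + v j ∈ M}
  have hHS : #H ≤ #S := by
    refine card_le_card_of_injOn
      (fun t ↦ ![t.1 0, t.1 1, t.2.1 0, t.2.1 1, t.2.2 0, t.2.2 1]) ?_ ?_
    · rintro ⟨x, y, z⟩ ht
      replace ht := mem_filter_univ _ |>.1 (mem_coe.1 ht)
      exact mem_filter_univ _ |>.2 fun i j ↦ add_mem_of_octahedron_adj (M := (M : Set V))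
        (fun i j ↦ (ht i j 0).1) (fun i k ↦ (ht i 0 k).2.1) (fun j k ↦ (ht 0 j k).2.2)
    · rintro ⟨x, y, z⟩ - ⟨x', y', z'⟩ - h
      simp only [Matrix.vecCons_inj, and_true] at h
      obtain ⟨h₀, h₁, h₂, h₃, h₄, h₅⟩ := h
      simp only [Prod.mk.injEq, funext_iff, Fin.forall_fin_two]
      grind
  have hcount := card_pow_eight_le_mul_card_fun_two fun a b c : V ↦
    a + b ∈ M ∧ a + c ∈ M ∧ b + c ∈ M
  refine hasRestriction_cycleMatroid_of_card_lt (S := S) (fun v hv ↦ mem_filter_univ v |>.1 hv) ?_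
  rw [Fintype.card_fin, ← hN]
  have hlt : N ^ 18 * (2 ^ 6 * N ^ 5) < N ^ 18 * #S := by
    calc N ^ 18 * (2 ^ 6 * N ^ 5) = 2 ^ 6 * N ^ 23 := by ring
      _ < _ := hM
      _ ≤ (N * N * N) ^ 6 * #H := hcount
      _ ≤ N ^ 18 * #S := by
        rw [← pow_three', ← pow_mul]
        gcongr
  calc 2 ^ 6 * N ^ 6 = 2 ^ 6 * N ^ 5 * N := by ring
    _ < #S * N := Nat.mul_lt_mul_of_pos_right (lt_of_mul_lt_mul_left' hlt) Fintype.card_pos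

theorem hasRestriction_octahedron_of_le_walshCoeff {M : Finset V} {ε : ℝ} (hε₀ : 0 ≤ ε)
    (hε : ε ≤ 1 / 2) (hV : 64 < (ε / 4) ^ 8 * Fintype.card V)
    (hM : (Fintype.card V : ℝ) ≤ 2 * #M)
    (hcoeff : ∀ f ≠ 0, (ε - 1 / 2) * Fintype.card V ≤ walshCoeff M f) :
    HasRestriction (cycleMatroid octahedron) (M : Set V) := by
  refine hasRestriction_octahedron_of_card_lt ?_
  rify
  set N : ℝ := (Fintype.card V : ℝ)
  have hN : 0 < N := by simp [N, Fintype.card_pos]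
  have htriangle := le_card_triangle_of_le_walshCoeff hε₀ hε hM hcoeff
  have htriple := card_mul_card_triangle_le_card_pairwise_add_mem M
  rify at htriple
  calc 2 ^ 6 * N ^ 23 = 64 * N ^ 23 := by norm_num
    _ < (ε / 4) ^ 8 * N * N ^ 23 := by gcongr
    _ = (N * (ε / 4 * N ^ 2)) ^ 8 := by ring
    _ ≤ _ := by
      gcongr
      exact (mul_le_mul_of_nonneg_left htriangle hN.le).trans htriple

end Dense

section NearAffine

theorem linearIndependent_add_smul_of_apply_eq_zero {K V ι : Type*} [Field K] [AddCommGroup V]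
    [Module K V] {f : Dual K V} {w : ι → V} (hw : LinearIndependent K w) (hf : ∀ i, f (w i) = 0)
    {q : V} (hq : f q ≠ 0) (c : ι → K) : LinearIndependent K fun i ↦ w i + c i • q := by
  rw [linearIndependent_iff'] at hw ⊢
  intro s g hg
  simp only [smul_add, sum_add_distrib, smul_smul, ← sum_smul] at hg
  have hgc : ∑ i ∈ s, g i * c i = 0 := by
    simpa [hf, hq] using congrArg f hg
  rw [hgc, zero_smul, add_zero] at hg
  exact hw s g hg

variable {V ι : Type*} [AddCommGroup V] [Module (ZMod 2) V]

theorem exists_forall_add_mem_of_card_lt [Fintype V] {f : Dual (ZMod 2) V} {M s : Finset V}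
    (hs : ∀ y ∈ s, f y = 0) (hcard : #s * #{x | x ∉ M ∧ f x ≠ 0} < #{x | f x ≠ 0}) :
    ∃ q, f q ≠ 0 ∧ ∀ y ∈ s, y + q ∈ M := by
  by_contra! hbad
  have hsub : ({q | f q ≠ 0} : Finset V) ⊆ s.biUnion fun y ↦ {q | y + q ∉ M ∧ f q ≠ 0} := by
    intro q hq
    rw [mem_filter_univ] at hq
    obtain ⟨y, hys, hyq⟩ := hbad q hq
    exact mem_biUnion.2 ⟨y, hys, mem_filter_univ q |>.2 ⟨hyq, hq⟩⟩
  have htranslate : ∀ y ∈ s, #{q | y + q ∉ M ∧ f q ≠ 0} ≤ #{x | x ∉ M ∧ f x ≠ 0} := fun y hy ↦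
    (card_equiv (Equiv.addLeft y) fun q ↦ by simp [hs y hy]).le
  exact hcard.not_ge ((card_le_card hsub).trans (card_biUnion_le_card_mul _ _ _ htranslate))

-- The colour class of `1` is shifted by a generic `q` off the hyperplane.
theorem hasRestriction_cycleMatroid_of_coloring [Fintype V] [Fintype ι] [DecidableEq ι]
    {G : SimpleGraph ι} {f : Dual (ZMod 2) V} {M : Finset V} {w : ι → LinearMap.ker f}
    (hw : LinearIndependent (ZMod 2) w) (c : ι → ZMod 2)
    (hmono : ∀ i j, G.Adj i j → c i = c j → (w i + w j : V) ∈ M)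
    (hcard : Fintype.card ι ^ 2 * #{x | x ∉ M ∧ f x ≠ 0} < #{x | f x ≠ 0}) :
    HasRestriction (cycleMatroid G) (M : Set V) := by
  have hf (i) : f (w i) = 0 := (w i).2
  let s : Finset V := univ.image fun p : ι × ι ↦ (w p.1 + w p.2 : V)
  have hs : #s ≤ Fintype.card ι ^ 2 := by
    rw [sq, ← Fintype.card_prod]
    exact card_image_le
  obtain ⟨q, hq, hqM⟩ := exists_forall_add_mem_of_card_lt (s := s)
    (forall_mem_image.2 fun p _ ↦ by rw [map_add, hf, hf, add_zero])
    ((Nat.mul_le_mul_right _ hs).trans_lt hcard)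
  have hw' : LinearIndependent (ZMod 2) fun i ↦ (w i : V) :=
    hw.map' (LinearMap.ker f).subtype (Submodule.ker_subtype _)
  refine hasRestriction_cycleMatroid_iff.2 ⟨fun i ↦ w i + c i • q,
    linearIndependent_add_smul_of_apply_eq_zero hw' hf hq c, fun i j hij ↦ ?_⟩
  rw [add_add_add_comm, ← add_smul]
  by_cases hc : c i = c j
  · rw [hc, CharTwo.add_self_eq_zero, zero_smul, add_zero]
    exact hmono i j hij hc
  · have hsum : c i + c j = 1 := by
      generalize c i = a at *
      generalize c j = b at *
      decide +revert
    rw [hsum, one_smul]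
    exact hqM _ (mem_image_of_mem _ (mem_univ (i, j)))

theorem linearIndependent_vecCons_three {x y z : V} (hx : x ≠ 0) (hy : y ≠ 0) (hz : z ≠ 0)
    (hxy : x ≠ y) (hxz : x ≠ z) (hyz : y ≠ z) (hsum : x + y + z ≠ 0) :
    LinearIndependent (ZMod 2) ![x, y, z] := by
  have hadd {a b : V} (hab : a ≠ b) : a + b ≠ 0 := by
    rwa [← ZModModule.sub_eq_add, sub_ne_zero]
  rw [Fintype.linearIndependent_iff]
  intro g hg
  have hZ (a : ZMod 2) : a = 0 ∨ a = 1 := by decide +revert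
  rw [Fin.sum_univ_three] at hg
  rw [Fin.forall_fin_succ, Fin.forall_fin_two]
  rcases hZ (g 0) with h₀ | h₀ <;> rcases hZ (g 1) with h₁ | h₁ <;>
    rcases hZ (g 2) with h₂ | h₂ <;> simp_all

theorem exists_add_add_mem_of_card_lt {D E : Finset V}
    (hE : ∀ x ∈ D, ∀ y ∈ D, x + y ∈ E) (hcard : #E * 2 < #D.offDiag) :
    ∃ x ∈ D, ∃ y ∈ D, ∃ z ∈ D, x ≠ y ∧ x ≠ z ∧ y ≠ z ∧ x + y + z ∈ D := by
  obtain ⟨e, -, he⟩ := exists_lt_card_fiber_of_mul_lt_card_of_maps_to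
    (f := fun p : V × V ↦ p.1 + p.2) (t := E) (fun p hp ↦
      hE _ (mem_offDiag.1 hp).1 _ (mem_offDiag.1 hp).2.1) hcard
  obtain ⟨⟨x, y⟩, hp⟩ := card_pos.1 (zero_lt_two.trans he)
  obtain ⟨⟨z, t⟩, hq, hne⟩ := exists_mem_notMem_of_card_lt_card
    ((card_le_two (a := (x, y)) (b := (y, x))).trans_lt he)
  simp only [mem_filter, mem_offDiag, mem_insert, mem_singleton, not_or] at hp hq hne
  obtain ⟨⟨hx, hy, hxy⟩, rfl⟩ := hp
  obtain ⟨⟨hz, ht, -⟩, hzt⟩ := hq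
  refine ⟨x, hx, y, hy, z, hz, hxy, ?_, ?_, ?_⟩
  · rintro rfl
    exact hne.1 (by rw [add_left_cancel hzt])
  · rintro rfl
    exact hne.2 (by rw [add_left_cancel (hzt.trans (add_comm _ _))])
  · rwa [← hzt, add_right_comm, ZModModule.add_self, zero_add]

theorem exists_independent_or_circuit_of_five_le_card [Finite V] {D : Finset V} (h₀ : 0 ∉ D)
    (hD : 5 ≤ #D) :
    (∃ v : Fin 4 → V, LinearIndependent (ZMod 2) v ∧ ∀ i, v i ∈ D) ∨
      ∃ v : Fin 3 → V, LinearIndependent (ZMod 2) v ∧ (∀ i, v i ∈ D) ∧ ∑ i, v i ∈ D := by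
  let W := Submodule.span (ZMod 2) (D : Set V)
  obtain hW | hW := le_or_gt 4 (finrank (ZMod 2) W)
  · left
    obtain ⟨v, hvD, -, hv⟩ := Submodule.exists_fun_fin_finrank_span_eq (ZMod 2) (D : Set V)
    exact ⟨v ∘ Fin.castLE hW, hv.comp _ (Fin.castLE_injective hW), fun i ↦ hvD _⟩
  · right
    have := Fintype.ofFinite V
    have hWcard : #{x | x ∈ W} ≤ 2 ^ 3 := by
      rw [← Fintype.card_subtype, card_eq_pow_finrank (K := ZMod 2), ZMod.card]
      exact Nat.pow_le_pow_right two_pos (Nat.le_of_lt_succ hW)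
    have hDcard : 20 ≤ #D.offDiag := by
      rw [offDiag_card, ← Nat.mul_sub_one]
      exact Nat.mul_le_mul hD (Nat.le_sub_one_of_lt hD)
    obtain ⟨x, hx, y, hy, z, hz, hxy, hxz, hyz, hsum⟩ :=
      exists_add_add_mem_of_card_lt (D := D) (E := {x | x ∈ W})
        (fun x hx y hy ↦ mem_filter_univ _ |>.2 <|
          add_mem (Submodule.subset_span hx) (Submodule.subset_span hy)) (by omega)
    refine ⟨![x, y, z], linearIndependent_vecCons_three ?_ ?_ ?_ hxy hxz hyz ?_, ?_, ?_⟩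
    any_goals exact ne_of_mem_of_not_mem ‹_› h₀
    · simp [Fin.forall_fin_succ, hx, hy, hz]
    · simpa [Fin.sum_univ_three] using hsum

theorem hasRestriction_octahedron_of_linearIndependent [Fintype V] {f : Dual (ZMod 2) V}
    {M : Finset V} {u : Fin 6 → LinearMap.ker f} (hu : LinearIndependent (ZMod 2) u)
    (hM : ∀ i : Fin 4, (u (Fin.castLE (by decide) i) : V) ∈ M)
    (hcard : 36 * #{x | x ∉ M ∧ f x ≠ 0} < #{x | f x ≠ 0}) :
    HasRestriction (cycleMatroid octahedron) (M : Set V) := by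
  -- The monochromatic edges form the paths `0 - 2 - 1` and `4 - 3 - 5`.
  let A : Fin 6 → Fin 6 → ZMod 2 := ![![1, 0, 0, 0, 1, 0], ![0, 1, 0, 0, 1, 0], ![0, 0, 0, 0, 1, 0],
    ![0, 0, 0, 0, 0, 1], ![0, 0, 1, 0, 0, 1], ![0, 0, 0, 1, 0, 1]]
  have hA : LinearIndependent (ZMod 2) A := by
    rw [Fintype.linearIndependent_iff]
    decide
  have hmono : ∀ i j : Fin 6, (i : ℕ) / 2 ≠ (j : ℕ) / 2 →
      (![0, 0, 0, 1, 1, 1] : Fin 6 → ZMod 2) i = ![0, 0, 0, 1, 1, 1] j →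
      ∃ k : Fin 4, A i + A j = Pi.single (Fin.castLE (by decide) k) 1 := by
    decide
  refine hasRestriction_cycleMatroid_of_coloring (hA.map' (Fintype.linearCombination (ZMod 2) u)
    (LinearMap.ker_eq_bot.2 hu.fintypeLinearCombination_injective)) ![0, 0, 0, 1, 1, 1]
    (fun i j hij hc ↦ ?_) (by simpa using hcard)
  simp only [Function.comp_apply, ← Submodule.coe_add, ← map_add]
  obtain ⟨k, hk⟩ := hmono i j (octahedron_adj.1 hij) hc
  rw [hk, Fintype.linearCombination_apply_single, one_smul]
  exact hM k

theorem hasRestriction_octahedron_of_circuit [Fintype V] {f : Dual (ZMod 2) V}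
    {M : Finset V} {u : Fin 6 → LinearMap.ker f} (hu : LinearIndependent (ZMod 2) u)
    (hM : ∀ i : Fin 3, (u (Fin.castLE (by decide) i) : V) ∈ M)
    (hsum : (∑ i : Fin 3, u (Fin.castLE (by decide) i) : V) ∈ M)
    (hcard : 36 * #{x | x ∉ M ∧ f x ≠ 0} < #{x | f x ≠ 0}) :
    HasRestriction (cycleMatroid octahedron) (M : Set V) := by
  -- The monochromatic edges form the cycle `0 - 2 - 1 - 3 - 0`.
  let A : Fin 6 → Fin 6 → ZMod 2 := ![![0, 0, 0, 1, 0, 0], ![1, 0, 1, 1, 0, 0], ![1, 0, 0, 1, 0, 0],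
    ![0, 1, 0, 1, 0, 0], ![0, 0, 0, 0, 1, 0], ![0, 0, 0, 0, 0, 1]]
  have hA : LinearIndependent (ZMod 2) A := by
    rw [Fintype.linearIndependent_iff]
    decide
  have hmono : ∀ i j : Fin 6, (i : ℕ) / 2 ≠ (j : ℕ) / 2 →
      (![0, 0, 0, 0, 1, 1] : Fin 6 → ZMod 2) i = ![0, 0, 0, 0, 1, 1] j →
      (∃ k : Fin 3, A i + A j = Pi.single (Fin.castLE (by decide) k) 1) ∨
        A i + A j = ∑ k : Fin 3, Pi.single (Fin.castLE (by decide) k) 1 := by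
    decide
  refine hasRestriction_cycleMatroid_of_coloring (hA.map' (Fintype.linearCombination (ZMod 2) u)
    (LinearMap.ker_eq_bot.2 hu.fintypeLinearCombination_injective)) ![0, 0, 0, 0, 1, 1]
    (fun i j hij hc ↦ ?_) (by simpa using hcard)
  simp only [Function.comp_apply, ← Submodule.coe_add, ← map_add]
  obtain ⟨k, hk⟩ | hk := hmono i j (octahedron_adj.1 hij) hc
  · rw [hk, Fintype.linearCombination_apply_single, one_smul]
    exact hM k
  · simpa [hk, map_sum] using hsum

theorem hasRestriction_octahedron_of_five_le_card_ker [Fintype V] {f : Dual (ZMod 2) V}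
    {M : Finset V} (hV : 7 ≤ finrank (ZMod 2) V) (h₀ : 0 ∉ M) (hker : 5 ≤ #{x ∈ M | f x = 0})
    (hcard : 36 * #{x | x ∉ M ∧ f x ≠ 0} < #{x | f x ≠ 0}) :
    HasRestriction (cycleMatroid octahedron) (M : Set V) := by
  have hrank : 6 ≤ finrank (ZMod 2) (LinearMap.ker f) := by
    have := finrank_le_finrank_ker_add_one f
    omega
  let D : Finset (LinearMap.ker f) := M.subtype (· ∈ LinearMap.ker f)
  have hD : 5 ≤ #D := by simpa [D, card_subtype] using hker
  obtain ⟨v, hv, hvD⟩ | ⟨v, hv, hvD, hsum⟩ :=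
    exists_independent_or_circuit_of_five_le_card (D := D) (by simpa [D] using h₀) hD
  · obtain ⟨u, hu, huv⟩ := exists_linearIndependent_extend_fin (m := 6) hv (by decide) hrank
    exact hasRestriction_octahedron_of_linearIndependent hu
      (fun i ↦ huv i ▸ mem_subtype.1 (hvD i)) hcard
  · obtain ⟨u, hu, huv⟩ := exists_linearIndependent_extend_fin (m := 6) hv (by decide) hrank
    refine hasRestriction_octahedron_of_circuit hu
      (fun i ↦ huv i ▸ mem_subtype.1 (hvD i)) ?_ hcard
    simpa [huv, D] using hsum

theorem five_le_card_ker_and_card_lt_of_walshCoeff_lt [Fintype V] {f : Dual (ZMod 2) V}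
    {M : Finset V} {ε : ℝ} (hf : f ≠ 0) (hM : Fintype.card V + 8 < 2 * #M)
    (hcoeff : walshCoeff M f < (ε - 1 / 2) * Fintype.card V) :
    5 ≤ #{x ∈ M | f x = 0} ∧ (#{x | x ∉ M ∧ f x ≠ 0} : ℝ) < ε * Fintype.card V := by
  have hhalf := two_mul_card_apply_ne_zero hf
  have hMsplit : #{x ∈ M | f x = 0} + #{x ∈ M | f x ≠ 0} = #M :=
    card_filter_add_card_filter_not _
  have hcompl : #{x ∈ M | f x ≠ 0} + #{x | x ∉ M ∧ f x ≠ 0} = #{x : V | f x ≠ 0} := by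
    rw [← card_filter_add_card_filter_not (s := {x : V | f x ≠ 0}) (· ∈ M), filter_filter,
      filter_filter]
    congr 2 <;> ext <;> simp [and_comm]
  constructor
  · omega
  · rw [walshCoeff_eq_card_sub_card] at hcoeff
    rify at hhalf hcompl
    have : (0 : ℝ) ≤ #{x ∈ M | f x = 0} := by positivity
    linarith

theorem two_mul_card_le_of_not_hasRestriction_octahedron [Fintype V] {M : Finset V}
    (hV : 80 ≤ finrank (ZMod 2) V) (h₀ : 0 ∉ M)
    (hM : ¬ HasRestriction (cycleMatroid octahedron) (M : Set V)) :
    2 * #M ≤ Fintype.card V + 8 := by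
  by_contra! hlarge
  -- `ε = 1 / 128` satisfies `36 * ε < 1 / 2`, and then `64 < (ε / 4) ^ 8 * 2 ^ 80`.
  by_cases hcoeff : ∀ f ≠ 0, (1 / 128 - 1 / 2 : ℝ) * Fintype.card V ≤ walshCoeff M f
  · refine hM (hasRestriction_octahedron_of_le_walshCoeff (by norm_num) (by norm_num) ?_ ?_ hcoeff)
    · have hcard : 2 ^ 80 ≤ Fintype.card V := by
        rw [card_eq_pow_finrank (K := ZMod 2), ZMod.card]
        exact Nat.pow_le_pow_right two_pos hV
      rify at hcard
      linarith
    · exact_mod_cast by omega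
  · push Not at hcoeff
    obtain ⟨f, hf, hlt⟩ := hcoeff
    obtain ⟨hker, hcompl⟩ := five_le_card_ker_and_card_lt_of_walshCoeff_lt hf hlarge hlt
    refine hM (hasRestriction_octahedron_of_five_le_card_ker (by omega) h₀ hker ?_)
    have hhalf := two_mul_card_apply_ne_zero hf
    rify at hhalf ⊢
    linarith

end NearAffine

section Extremal

-- A pair with two colours sends exactly one monochromatic edge to each of the other four vertices.
-- If every pair is monochromatic, then two pairs share their colour, and span four edges.
theorem exists_pair_four_le_card_monochromatic (c : Fin 6 → ZMod 2) :
    ∃ a : Fin 3, 4 ≤ #{p : Fin 6 × Fin 6 |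
      (p.1 : ℕ) / 2 = a ∧ (p.2 : ℕ) / 2 ≠ a ∧ c p.1 = c p.2} := by
  decide +revert

theorem injOn_single_add_single (a : Fin 3) :
    Set.InjOn (fun p : Fin 6 × Fin 6 ↦ (Pi.single p.1 1 + Pi.single p.2 1 : Fin 6 → ZMod 2))
      {p | (p.1 : ℕ) / 2 = a ∧ (p.2 : ℕ) / 2 ≠ a} := by
  rintro ⟨i, j⟩ ⟨hi, hj⟩ ⟨k, l⟩ ⟨hk, hl⟩ h
  dsimp only at hi hj hk hl h
  decide +revert

variable {V : Type*} [AddCommGroup V] [Module (ZMod 2) V]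

theorem not_hasRestriction_octahedron_of_ker_subset {f : Dual (ZMod 2) V} {M : Set V} {a b c : V}
    (hM : ∀ x ∈ M, f x = 0 → x ∈ ({a, b, a + b, c} : Finset V)) :
    ¬ HasRestriction (cycleMatroid octahedron) M := by
  rintro ⟨ψ, hψ, hψM⟩
  let edge (p : Fin 6 × Fin 6) : Fin 6 → ZMod 2 := Pi.single p.1 1 + Pi.single p.2 1
  obtain ⟨k, hk⟩ := exists_pair_four_le_card_monochromatic fun i ↦ f (ψ (Pi.single i 1))
  set E : Finset (Fin 6 × Fin 6) := {p | (p.1 : ℕ) / 2 = k ∧ (p.2 : ℕ) / 2 ≠ k ∧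
    f (ψ (Pi.single p.1 1)) = f (ψ (Pi.single p.2 1))}
  have hsub : E.image (ψ ∘ edge) ⊆ {a, b, a + b, c} := by
    intro x hx
    obtain ⟨p, hp, rfl⟩ := mem_image.1 hx
    obtain ⟨hp₁, hp₂, hc⟩ := mem_filter_univ p |>.1 hp
    refine hM _ (hψM ⟨_, ⟨p.1, p.2, octahedron_adj.2 (hp₁.trans_ne hp₂.symm), rfl⟩, rfl⟩) ?_
    simp only [edge, Function.comp_apply, map_add, hc, CharTwo.add_self_eq_zero]
  have hinj : Set.InjOn (ψ ∘ edge) E :=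
    hψ.comp_injOn <| (injOn_single_add_single k).mono fun p hp ↦
      (mem_filter_univ p |>.1 hp).imp_right And.left
  have himage : E.image (ψ ∘ edge) = {a, b, a + b, c} := by
    refine eq_of_subset_of_card_le hsub ?_
    rw [card_image_of_injOn hinj]
    exact card_le_four.trans hk
  let weight : Dual (ZMod 2) (Fin 6 → ZMod 2) :=
    ∑ i ∈ {i : Fin 6 | (i : ℕ) / 2 = k}, LinearMap.proj i
  have hweight (x) (hx : x ∈ ({a, b, a + b, c} : Finset V)) : ∃ y, ψ y = x ∧ weight y = 1 := by
    rw [← himage, mem_image] at hx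
    obtain ⟨p, hp, rfl⟩ := hx
    obtain ⟨hp₁, hp₂, -⟩ := mem_filter_univ p |>.1 hp
    exact ⟨edge p, rfl, by simp [weight, edge, hp₁, hp₂, sum_add_distrib]⟩
  obtain ⟨y₁, rfl, h₁⟩ := hweight a (by simp)
  obtain ⟨y₂, rfl, h₂⟩ := hweight b (by simp)
  obtain ⟨y₃, hy₃, h₃⟩ := hweight (ψ y₁ + ψ y₂) (by simp)
  rw [← map_add, hψ.eq_iff] at hy₃
  rw [hy₃, map_add, h₁, h₂] at h₃
  exact absurd h₃ (by decide)

theorem exists_not_hasRestriction_octahedron_two_mul_card_eq [Fintype V]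
    (hV : 4 ≤ finrank (ZMod 2) V) :
    ∃ M : Finset V, 0 ∉ M ∧ ¬ HasRestriction (cycleMatroid octahedron) (M : Set V) ∧
      2 * #M = Fintype.card V + 8 := by
  have : Nontrivial V := nontrivial_of_finrank_pos (R := ZMod 2) (by omega)
  obtain ⟨f, hf⟩ := exists_ne (0 : Dual (ZMod 2) V)
  have hrank : 3 ≤ finrank (ZMod 2) (LinearMap.ker f) := by
    have := finrank_le_finrank_ker_add_one f
    omega
  obtain ⟨v, hv⟩ := exists_linearIndependent_of_le_finrank hrank
  let φ := (LinearMap.ker f).subtype ∘ₗ Fintype.linearCombination (ZMod 2) v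
  have hφ : Function.Injective φ :=
    Subtype.val_injective.comp hv.fintypeLinearCombination_injective
  have hfφ (y) : f (φ y) = 0 := (Fintype.linearCombination (ZMod 2) v y).2
  let D : Finset (Fin 3 → ZMod 2) := {![1, 0, 0], ![0, 1, 0], ![1, 0, 0] + ![0, 1, 0], ![0, 0, 1]}
  refine ⟨({x | f x ≠ 0} : Finset V) ∪ D.image φ, ?_, ?_, ?_⟩
  · have hD : 0 ∉ D := by decide
    simpa [map_eq_zero_iff φ hφ] using hD
  · refine not_hasRestriction_octahedron_of_ker_subset (f := f) (a := φ ![1, 0, 0])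
      (b := φ ![0, 1, 0]) (c := φ ![0, 0, 1]) fun x hx hfx ↦ ?_
    rw [mem_coe, mem_union, mem_filter_univ] at hx
    simpa [D, -Matrix.cons_add, -Matrix.add_cons, map_add, eq_comm] using hx.resolve_left (· hfx)
  · have hD : #D = 4 := by decide
    rw [card_union_of_disjoint, card_image_of_injective _ hφ, hD, mul_add,
      two_mul_card_apply_ne_zero hf]
    refine disjoint_left.2 fun x hx hxD ↦ ?_
    obtain ⟨y, -, rfl⟩ := mem_image.1 hxD
    exact mem_filter_univ (φ y) |>.1 hx (hfφ y)

end Extremal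

/-- Exact Turán number for the cycle matroid of the octahedron. -/
theorem octahedron_exact :
    ∃ n₀ : ℕ, ∀ n ≥ n₀,
      exNum (cycleMatroid octahedron) n = 2 ^ (n - 1) + 4 := by
  refine ⟨80, fun n hn ↦ ?_⟩
  have hcard : Fintype.card (Fin n → ZMod 2) = 2 * 2 ^ (n - 1) := by
    rw [Fintype.card_fun, ZMod.card, Fintype.card_fin, mul_pow_sub_one (by omega)]
  have hrank : finrank (ZMod 2) (Fin n → ZMod 2) = n := finrank_fin_fun _
  refine IsGreatest.csSup_eq ⟨?_, ?_⟩
  · obtain ⟨M, h₀, hM, hMcard⟩ := exists_not_hasRestriction_octahedron_two_mul_card_eq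
      (V := Fin n → ZMod 2) (by omega)
    refine ⟨M, h₀, hM, ?_⟩
    rw [Set.ncard_coe_finset]
    omega
  · rintro _ ⟨M, h₀, hM, rfl⟩
    have hMcard := two_mul_card_le_of_not_hasRestriction_octahedron (M := M.toFinset)
      (by omega) (by simpa) (by simpa)
    rw [Set.ncard_eq_toFinset_card']
    omega
end
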